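/- Given any irrational α ∈ ℝ ∖ ℚ there is a strictly increasing sequence (k_i) of natural numbers with the following properties. For any C¹-diffeomorphisms f and g of S¹ with rotation number α, any points x, y ∈ S¹, and any ε > 0: (i) for every i the orbit segments {x, …, f^{k_i}(x)} and {y, …, g^{k_i}(y)} are adapted segments; (ii) there is i₀ such that for every i ≥ i₀ there exists a C¹-diffeomorphism g_i of S¹ with: g_i is ε-C¹-close to g; {y, …, g_i^{k_i}(y)} is an adapted orbit segment of g_i, ordered on S¹ in the same way as {x, …, f^{k_i}(x)} and as {y, …, g^{k_i}(y)}; and the initial and final ratios of g_i on the adapted segment {y, …, g_i^{k_i}(y)} are equal to the initial and final ratios of f on the adapted segment {x, …, f^{k_i}(x)}. -/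

import Mathlib

open Set Filter

/-- `inArc a w b` : the point `w` (mod 1) lies strictly inside the positively oriented
open arc of the circle `ℝ/ℤ` from `a` (mod 1) to `b` (mod 1). -/
def inArc (a w b : ℝ) : Prop :=
  0 < Int.fract (w - a) ∧ Int.fract (w - a) < Int.fract (b - a)

/-- A lift of an orientation-preserving `C¹`-diffeomorphism of the circle `S¹ = ℝ/ℤ`:
a `C¹` map `F : ℝ → ℝ` with `F (x+1) = F x + 1` and `F' > 0` everywhere. -/
structure CircleDiffeo where
  toFun : ℝ → ℝ
  contDiff : ContDiff ℝ 1 toFun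
  deriv_pos : ∀ x : ℝ, 0 < deriv toFun x
  commute_translation : ∀ x : ℝ, toFun (x + 1) = toFun x + 1

/-- `f` has rotation number (a lift of) `α`. -/
def hasRotationNumber (f : CircleDiffeo) (α : ℝ) : Prop :=
  Tendsto (fun n : ℕ => f.toFun^[n] 0 / (n : ℝ)) atTop (nhds α)

/-- The `C¹`-distance between (lifts of) circle maps : sup distance between the maps
plus sup distance between the derivatives (computed over a fundamental domain). -/
noncomputable def distC1 (f g : ℝ → ℝ) : ℝ :=
  (⨆ x : Icc (0:ℝ) 1, |f x.1 - g x.1|) + (⨆ x : Icc (0:ℝ) 1, |deriv f x.1 - deriv g x.1|)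

/-- The orbit segment `x, F x, …, F^[n] x` is *adapted*, with final basic interval
`[F^[i] x, F^[j] x]` and initial basic interval `[F^[n-j] x, F^[n-i] x]` (all viewed
on the circle `ℝ/ℤ`). -/
structure IsAdaptedSeg (F : ℝ → ℝ) (x : ℝ) (n i j : ℕ) : Prop where
  hi1 : 1 ≤ i
  hi2 : i ≤ n - 1
  hj1 : 1 ≤ j
  hj2 : j ≤ n - 1
  x_mem : inArc (F^[n - j] x) x (F^[n - i] x)
  x_only : ∀ k ≤ n, inArc (F^[n - j] x) (F^[k] x) (F^[n - i] x) → Int.fract (F^[k] x - x) = 0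
  fn_mem : inArc (F^[i] x) (F^[n] x) (F^[j] x)
  fn_only : ∀ k ≤ n, inArc (F^[i] x) (F^[k] x) (F^[j] x) → Int.fract (F^[k] x - F^[n] x) = 0
  adapted : i + j ≠ n - 1

/-- The initial ratio `R₀ = ℓ([a,x])/ℓ([x,b])` of an adapted orbit segment,
where `a = F^[n-j] x` and `b = F^[n-i] x`. -/
noncomputable def initialRatio (F : ℝ → ℝ) (x : ℝ) (n i j : ℕ) : ℝ :=
  Int.fract (x - F^[n - j] x) / Int.fract (F^[n - i] x - x)

/-- The final ratio `Rₙ = ℓ([c,Fⁿx])/ℓ([Fⁿx,d])` of an adapted orbit segment,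
where `c = F^[i] x` and `d = F^[j] x`. -/
noncomputable def finalRatio (F : ℝ → ℝ) (x : ℝ) (n i j : ℕ) : ℝ :=
  Int.fract (F^[n] x - F^[i] x) / Int.fract (F^[j] x - F^[n] x)

/-- Two finite sequences of points of the circle are similarly ordered: some
orientation-preserving circle homeomorphism (given by its lift `φ`) maps one to the other. -/
def SimilarlyOrdered (p q : ℕ → ℝ) (n : ℕ) : Prop :=
  ∃ φ : ℝ → ℝ, Continuous φ ∧ StrictMono φ ∧ (∀ z : ℝ, φ (z + 1) = φ z + 1) ∧
    ∀ k ≤ n, Int.fract (φ (p k) - q k) = 0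

/-- The (closed) circle arc from `u` to `v` contains no point of the orbit segment
`x, …, F^[n] x` in its interior: it is contained in the closure of a connected
component of the complement of the orbit segment. -/
def NoSegPointInside (F : ℝ → ℝ) (x : ℝ) (n : ℕ) (u v : ℝ) : Prop :=
  ∀ k ≤ n, ¬ inArc u (F^[k] x) v

namespace CircleDiffeo

lemma diff (f : CircleDiffeo) : Differentiable ℝ f.toFun := f.contDiff.differentiable (by norm_num)
lemma cont (f : CircleDiffeo) : Continuous f.toFun := f.contDiff.continuous
lemma smono (f : CircleDiffeo) : StrictMono f.toFun := strictMono_of_deriv_pos f.deriv_pos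
lemma it_cont (f : CircleDiffeo) (n : ℕ) : Continuous (f.toFun^[n]) := f.cont.iterate n
lemma it_smono (f : CircleDiffeo) (n : ℕ) : StrictMono (f.toFun^[n]) := f.smono.iterate n

/-- the associated degree one lift of Mathlib -/
def deg1 (f : CircleDiffeo) : CircleDeg1Lift where
  toFun := f.toFun
  monotone' := f.smono.monotone
  map_add_one' := f.commute_translation

lemma coe_deg1 (f : CircleDiffeo) : ⇑f.deg1 = f.toFun := rfl

lemma it_add_int (f : CircleDiffeo) (n : ℕ) (x : ℝ) (M : ℤ) :
    f.toFun^[n] (x + M) = f.toFun^[n] x + M := by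
  have := (f.deg1 ^ n).map_add_int x M
  rwa [CircleDeg1Lift.coe_pow, coe_deg1] at this

lemma it_sub_int (f : CircleDiffeo) (n : ℕ) (x : ℝ) (M : ℤ) :
    f.toFun^[n] (x - M) = f.toFun^[n] x - M := by
  have := (f.deg1 ^ n).map_sub_int x M
  rwa [CircleDeg1Lift.coe_pow, coe_deg1] at this

lemma add_int (f : CircleDiffeo) (x : ℝ) (M : ℤ) :
    f.toFun (x + M) = f.toFun x + M := f.it_add_int 1 x M

lemma tau (f : CircleDiffeo) {α : ℝ} (h : hasRotationNumber f α) : f.deg1.translationNumber = α := by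
  apply CircleDeg1Lift.translationNumber_eq_of_tendsto₀
  simpa [coe_deg1, hasRotationNumber] using h

lemma tau_pow (f : CircleDiffeo) {α : ℝ} (h : hasRotationNumber f α) (n : ℕ) :
    (f.deg1 ^ n).translationNumber = n * α := by
  rw [CircleDeg1Lift.translationNumber_pow, f.tau h]

/-- The order of the orbit is that of the rotation. -/
lemma order (f : CircleDiffeo) {α : ℝ} (h : hasRotationNumber f α) (x : ℝ) (k l : ℕ) (M N : ℤ)
    (hkl : k * α + M < l * α + N) : f.toFun^[k] x + M < f.toFun^[l] x + N := by
  rcases le_total k l with hle | hle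
  · obtain ⟨d, rfl⟩ := Nat.exists_eq_add_of_le hle
    have h1 : ((M - N : ℤ) : ℝ) < (f.deg1 ^ d).translationNumber := by
      rw [f.tau_pow h]; push_cast at hkl ⊢; linarith
    have := CircleDeg1Lift.lt_map_of_int_lt_translationNumber _ h1 (f.toFun^[k] x)
    rw [CircleDeg1Lift.coe_pow, coe_deg1, ← Function.iterate_add_apply, add_comm d k] at this
    push_cast at this; linarith
  · obtain ⟨d, rfl⟩ := Nat.exists_eq_add_of_le hle
    have h1 : (f.deg1 ^ d).translationNumber < ((N - M : ℤ) : ℝ) := by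
      rw [f.tau_pow h]; push_cast at hkl ⊢; linarith
    have := CircleDeg1Lift.map_lt_of_translationNumber_lt_int _ h1 (f.toFun^[l] x)
    rw [CircleDeg1Lift.coe_pow, coe_deg1, ← Function.iterate_add_apply, add_comm d l] at this
    push_cast at this; linarith

end CircleDiffeo

lemma irr_eq {α : ℝ} (hα : Irrational α) {k l : ℕ} {M N : ℤ}
    (h : (k:ℝ) * α + M = l * α + N) : k = l ∧ M = N := by
  have hkl : k = l := by
    by_contra hne
    apply hα
    refine ⟨((N - M : ℤ) : ℚ) / (((k:ℤ) - (l:ℤ) : ℤ) : ℚ), ?_⟩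
    have : ((k:ℝ) - l) ≠ 0 := by
      intro h0; apply hne; exact_mod_cast sub_eq_zero.1 h0
    push_cast
    field_simp
    linarith
  subst hkl
  refine ⟨rfl, ?_⟩
  have : (M:ℝ) = N := by linarith
  exact_mod_cast this

namespace CircleDiffeo

lemma order_iff (f : CircleDiffeo) {α : ℝ} (hα : Irrational α) (h : hasRotationNumber f α)
    (x : ℝ) (k l : ℕ) (M N : ℤ) :
    f.toFun^[k] x + M < f.toFun^[l] x + N ↔ k * α + M < l * α + N := by
  refine ⟨fun h1 => ?_, f.order h x k l M N⟩
  by_contra h2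
  rcases (not_lt.1 h2).lt_or_eq with h3 | h3
  · exact absurd (f.order h x l k N M h3) (not_lt.2 h1.le)
  · obtain ⟨rfl, rfl⟩ := irr_eq hα h3
    exact lt_irrefl _ h1

end CircleDiffeo

/-- Farey pairs -/
structure Farey (α : ℝ) (u v : ℕ) (p p' : ℤ) : Prop where
  hu : 1 ≤ u
  hv : 1 ≤ v
  hd : 0 < u * α - p
  hd' : 0 < p' - v * α
  det : (u:ℤ) * p' - v * p = 1

namespace Farey

lemma empty {α : ℝ} {u v : ℕ} {p p' : ℤ} (F : Farey α u v p p') {l : ℤ} {M : ℤ} (hl : 0 < l)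
    (hl2 : l < u + v) (h1 : -(p' - v * α) < l * α + M) (h2 : l * α + M < u * α - p) : False := by
  have hd := F.hd
  have hd' := F.hd'
  have hdet := F.det
  have hu : (1:ℤ) ≤ u := by exact_mod_cast F.hu
  have hv : (1:ℤ) ≤ v := by exact_mod_cast F.hv
  obtain ⟨a, ha⟩ : ∃ a : ℤ, a = l * p' + M * v := ⟨_, rfl⟩
  obtain ⟨b, hb⟩ : ∃ b : ℤ, b = -(u * M) - l * p := ⟨_, rfl⟩
  have e1 : l = a * u + b * v := by rw [ha, hb]; linear_combination (-l) * hdet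
  have e2 : -M = a * p + b * p' := by rw [ha, hb]; linear_combination (M) * hdet
  have e1' : (l:ℝ) = a * u + b * v := by exact_mod_cast e1
  have e2' : -(M:ℝ) = a * p + b * p' := by exact_mod_cast e2
  have e3 : l * α + M = a * (u * α - p) - b * (p' - v * α) := by
    rw [e1']; linear_combination -e2'
  rw [e3] at h1 h2
  rcases le_or_gt a 0 with ha0 | ha0 <;> rcases le_or_gt b 0 with hb0 | hb0
  · nlinarith
  · have ha1 : (a:ℝ) ≤ 0 := by exact_mod_cast ha0
    have hb1 : (1:ℝ) ≤ b := by exact_mod_cast hb0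
    nlinarith
  · have ha1 : (1:ℝ) ≤ a := by exact_mod_cast ha0
    have hb1 : (b:ℝ) ≤ 0 := by exact_mod_cast hb0
    nlinarith
  · have ha1 : 1 ≤ a := by exact_mod_cast ha0
    have hb1 : 1 ≤ b := by exact_mod_cast hb0
    nlinarith

lemma swap {α : ℝ} {u v : ℕ} {p p' : ℤ} (F : Farey α u v p p') : Farey (-α) v u (-p') (-p) where
  hu := F.hv
  hv := F.hu
  hd := by have := F.hd'; push_cast; linarith
  hd' := by have := F.hd; push_cast; linarith
  det := by have := F.det; linarith

lemma addv {α : ℝ} {u v : ℕ} {p p' : ℤ} (F : Farey α u v p p') (c : ℕ)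
    (h : 0 < (p' - v * α) - c * (u * α - p)) : Farey α u (v + c * u) p (p' + c * p) where
  hu := F.hu
  hv := F.hv.trans (Nat.le_add_right _ _)
  hd := F.hd
  hd' := by push_cast; linarith
  det := by have := F.det; push_cast; linarith

lemma addu {α : ℝ} {u v : ℕ} {p p' : ℤ} (F : Farey α u v p p') (c : ℕ)
    (h : 0 < (u * α - p) - c * (p' - v * α)) : Farey α (u + c * v) v (p + c * p') p' where
  hu := F.hu.trans (Nat.le_add_right _ _)
  hv := F.hv
  hd := by push_cast; linarith
  hd' := F.hd'
  det := by have := F.det; push_cast; linarith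

lemma one {α : ℝ} {u v : ℕ} {p p' : ℤ} (F : Farey α u v p p') :
    u * (p' - v * α) + v * (u * α - p) = 1 := by
  have h : (u:ℝ) * p' - v * p = 1 := by exact_mod_cast F.det
  linarith

lemma lt_one {α : ℝ} {u v : ℕ} {p p' : ℤ} (F : Farey α u v p p') (hu : 2 ≤ u) :
    (p' - v * α) + (u * α - p) < 1 := by
  have h := F.one
  have h1 : (2:ℝ) ≤ u := by exact_mod_cast hu
  have h2 : (1:ℝ) ≤ v := by exact_mod_cast F.hv
  have := F.hd; have := F.hd'
  nlinarith

lemma ne {α : ℝ} (hα : Irrational α) {u v : ℕ} {p p' : ℤ} (F : Farey α u v p p') (c c' : ℕ)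
    (hc : 1 ≤ c) : (c:ℝ) * (p' - v * α) ≠ c' * (u * α - p) := by
  intro h
  have h1 : ((c * v + c' * u : ℕ) : ℝ) * α + (0:ℤ) = (0:ℕ) * α + ((c * p' + c' * p : ℤ)) := by
    push_cast; linarith
  have h2 := (irr_eq hα h1).1
  have h3 := F.hv
  have : 1 ≤ c * v := Nat.mul_pos hc h3
  omega

lemma start {α : ℝ} (hα : Irrational α) : Farey α 1 1 ⌊α⌋ (⌊α⌋ + 1) where
  hu := le_rfl
  hv := le_rfl
  hd := by
    have := Int.floor_le α
    rcases this.lt_or_eq with h | h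
    · push_cast; linarith
    · exact absurd h.symm (by simpa using hα.ne_int ⌊α⌋)
  hd' := by have := Int.lt_floor_add_one α; push_cast; linarith
  det := by push_cast; ring

/-- If the left gap is smaller, one may subtract multiples of it until the gaps are comparable. -/
lemma reduce {α : ℝ} (hα : Irrational α) {u v : ℕ} {p p' : ℤ} (F : Farey α u v p p')
    (h : u * α - p < p' - v * α) : ∃ c : ℕ, u * α - p < (p' - v * α) - c * (u * α - p) ∧
      (p' - v * α) - c * (u * α - p) < 2 * (u * α - p) := by
  have hd := F.hd
  set δ := u * α - p with hδ
  set δ' := p' - v * α with hδ'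
  have hf1 : ⌊δ' / δ⌋₊ ≤ δ' / δ := Nat.floor_le (by have := F.hd'; exact div_nonneg this.le hd.le)
  have hf2 : δ' / δ < ⌊δ' / δ⌋₊ + 1 := Nat.lt_floor_add_one _
  have hf3 : 1 ≤ ⌊δ' / δ⌋₊ := by
    rw [Nat.one_le_floor_iff, le_div_iff₀ hd]; linarith
  obtain ⟨c, hc⟩ := Nat.exists_eq_add_of_le hf3
  rw [hc] at hf1 hf2
  rw [le_div_iff₀ hd] at hf1
  rw [div_lt_iff₀ hd] at hf2
  push_cast at hf1 hf2
  refine ⟨c, ?_, by linarith⟩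
  have hne := F.ne hα 1 (1 + c) le_rfl
  rw [← hδ, ← hδ'] at hne
  push_cast at hne
  rcases hf1.lt_or_eq with h1 | h1
  · linarith
  · exact absurd (by linarith) hne

lemma step1 {α : ℝ} (hα : Irrational α) {u v : ℕ} {p p' : ℤ} (F : Farey α u v p p')
    (h : u * α - p < p' - v * α) : ∃ u1 v1 p1 p1', Farey α u1 v1 p1 p1' ∧ u + 1 ≤ u1 ∧ v + 1 ≤ v1 ∧
      u1 ≤ 2 * v1 ∧ v1 ≤ 2 * u1 := by
  obtain ⟨c, hc1, hc2⟩ := F.reduce hα h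
  have F1 := F.addv (c + 1) (by push_cast; linarith)
  have F2 := F1.addu 1 (by push_cast; linarith)
  have := F.hu
  have := F.hv
  refine ⟨_, _, _, _, F2, ?_, ?_, ?_, ?_⟩ <;> nlinarith [Nat.zero_le (c * u)]

lemma step {α : ℝ} (hα : Irrational α) {u v : ℕ} {p p' : ℤ} (F : Farey α u v p p') :
    ∃ u1 v1 p1 p1', Farey α u1 v1 p1 p1' ∧ u + 1 ≤ u1 ∧ v + 1 ≤ v1 ∧
      u1 ≤ 2 * v1 ∧ v1 ≤ 2 * u1 := by
  have hne := F.ne hα 1 1 le_rfl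
  rcases lt_or_gt_of_ne hne with h | h
  · obtain ⟨u1, v1, p1, p1', F1, h1, h2, h3, h4⟩ := F.swap.step1 hα.neg (by push_cast at h ⊢; linarith)
    refine ⟨v1, u1, -p1', -p1, by simpa using F1.swap, h2, h1, h4, h3⟩
  · exact F.step1 hα (by push_cast at h ⊢; linarith)

lemma large {α : ℝ} (hα : Irrational α) (N : ℕ) :
    ∃ u v p p', Farey α u v p p' ∧ N ≤ u ∧ N ≤ v ∧ u ≤ 2 * v ∧ v ≤ 2 * u := by
  induction N with
  | zero => exact ⟨_, _, _, _, start hα, by simp⟩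
  | succ N ih =>
    obtain ⟨u, v, p, p', F, h1, h2, h3, h4⟩ := ih
    obtain ⟨u1, v1, p1, p1', F1, h5, h6, h7, h8⟩ := F.step hα
    exact ⟨u1, v1, p1, p1', F1, by omega, by omega, h7, h8⟩

/-- good pairs -/
def G1 (α : ℝ) (u v : ℕ) (p p' : ℤ) : Prop :=
  u * α - p < p' - v * α ∧ p' - v * α < 2 * (u * α - p) ∧ u ≤ 2 * v

/-- good pairs, flipped -/
def G2 (α : ℝ) (u v : ℕ) (p p' : ℤ) : Prop :=
  p' - v * α < u * α - p ∧ u * α - p < 2 * (p' - v * α) ∧ v ≤ 2 * u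

lemma swap_G {α : ℝ} {u v : ℕ} {p p' : ℤ} : G1 α u v p p' ↔ G2 (-α) v u (-p') (-p) := by
  unfold G1 G2
  push_cast
  constructor
  · rintro ⟨h1, h2, h3⟩
    exact ⟨by linarith, by linarith, h3⟩
  · rintro ⟨h1, h2, h3⟩
    exact ⟨by linarith, by linarith, h3⟩

lemma swap_G' {α : ℝ} {u v : ℕ} {p p' : ℤ} : G2 α u v p p' ↔ G1 (-α) v u (-p') (-p) := by
  have := @swap_G (-α) v u (-p') (-p)
  simpa using this.symm

lemma good1 {α : ℝ} (hα : Irrational α) {u v : ℕ} {p p' : ℤ} (F : Farey α u v p p')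
    (h : u * α - p < p' - v * α) : ∃ u1 v1 p1 p1', Farey α u1 v1 p1 p1' ∧ u ≤ u1 ∧ v ≤ v1 ∧
      (G1 α u1 v1 p1 p1' ∨ G2 α u1 v1 p1 p1') := by
  obtain ⟨c, hc1, hc2⟩ := F.reduce hα h
  have hd := F.hd
  have F0 := F.addv c (by linarith)
  by_cases hu : u ≤ v + c * u
  · refine ⟨_, _, _, _, F0, le_rfl, by omega, Or.inl ⟨?_, ?_, by omega⟩⟩ <;> push_cast <;> linarith
  · have hc0 : c = 0 := by
      by_contra hc
      have : u ≤ c * u := Nat.le_mul_of_pos_left _ (Nat.pos_of_ne_zero hc)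
      omega
    subst hc0
    have F1 := F.addv 1 (by push_cast at hc1 ⊢; linarith)
    obtain ⟨c', hc1', hc2'⟩ := F1.swap.reduce hα.neg (by push_cast at hc1 hc2 ⊢; linarith)
    push_cast at hc1 hc2 hc1' hc2'
    have hd1 := F1.hd'
    push_cast at hd1
    have F2 := F1.addu c' (by push_cast; linarith)
    refine ⟨_, _, _, _, F2, by omega, by omega, Or.inr ⟨?_, ?_, ?_⟩⟩
    · push_cast; linarith
    · push_cast; linarith
    · nlinarith [Nat.zero_le (c' * (v + 1 * u))]

lemma good {α : ℝ} (hα : Irrational α) (N : ℕ) :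
    ∃ u v p p', Farey α u v p p' ∧ N ≤ u ∧ N ≤ v ∧ (G1 α u v p p' ∨ G2 α u v p p') := by
  obtain ⟨u, v, p, p', F, hu, hv, -, -⟩ := large hα N
  have hne := F.ne hα 1 1 le_rfl
  rcases lt_or_gt_of_ne hne with h | h
  · obtain ⟨u1, v1, p1, p1', F1, h1, h2, h3⟩ :=
      F.swap.good1 hα.neg (by push_cast at h ⊢; linarith)
    refine ⟨v1, u1, -p1', -p1, by simpa using F1.swap, by omega, by omega, ?_⟩
    rcases h3 with h3 | h3
    · right; simpa using swap_G.1 h3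
    · left; simpa using swap_G'.1 h3
  · obtain ⟨u1, v1, p1, p1', F1, h1, h2, h3⟩ := F.good1 hα (by push_cast at h ⊢; linarith)
    exact ⟨u1, v1, p1, p1', F1, by omega, by omega, h3⟩

end Farey

lemma sum_len (K : ℕ) (a b : ℕ → ℝ) (hab : ∀ k < K, a k < b k) (hself : ∀ k < K, b k ≤ a k + 1)
    (hdis : ∀ k < K, ∀ l < K, k ≠ l → ∀ M : ℤ, b k ≤ a l + M ∨ b l + M ≤ a k) :
    ∑ k ∈ Finset.range K, (b k - a k) ≤ 1 := by
  rcases Nat.eq_zero_or_pos K with rfl | hK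
  · simp
  obtain ⟨m, hm⟩ : ∃ m : ℕ → ℤ, ∀ k, m k = -⌊a k - a 0⌋ := ⟨_, fun _ => rfl⟩
  have h1 : ∀ k, a 0 ≤ a k + m k ∧ a k + m k < a 0 + 1 := by
    intro k
    have h1 := Int.floor_le (a k - a 0)
    have h2 := Int.lt_floor_add_one (a k - a 0)
    rw [hm]; push_cast
    constructor <;> linarith
  have h2 : ∀ k < K, b k + m k ≤ a 0 + 1 := by
    intro k hk
    by_cases h0 : k = 0
    · subst h0
      have : m 0 = 0 := by rw [hm]; simp
      rw [this]; push_cast; linarith [hself 0 hk]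
    · rcases hdis k hk 0 hK h0 (1 - m k) with h | h
      · push_cast at h; linarith
      · push_cast at h; have := (h1 k).2; have := hab 0 hK; linarith
  have h3 : MeasureTheory.volume (⋃ k ∈ Finset.range K, Ioo (a k + m k) (b k + m k)) =
      ∑ k ∈ Finset.range K, MeasureTheory.volume (Ioo (a k + m k) (b k + m k)) := by
    apply MeasureTheory.measure_biUnion_finset
    · intro k hk l hl hkl
      simp only [Finset.coe_range, mem_Iio] at hk hl
      rw [Function.onFun, Set.disjoint_left]
      rintro z ⟨z1, z2⟩ ⟨z3, z4⟩
      rcases hdis k hk l hl hkl (m l - m k) with h | h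
      · push_cast at h; linarith
      · push_cast at h; linarith
    · intro k _
      exact measurableSet_Ioo
  have h4 : MeasureTheory.volume (⋃ k ∈ Finset.range K, Ioo (a k + m k) (b k + m k)) ≤
      MeasureTheory.volume (Icc (a 0) (a 0 + 1)) := by
    apply MeasureTheory.measure_mono
    intro z hz
    simp only [Finset.mem_range, mem_iUnion] at hz
    obtain ⟨k, hk, z1, z2⟩ := hz
    exact ⟨by linarith [(h1 k).1], by linarith [h2 k hk]⟩
  rw [h3] at h4
  simp only [Real.volume_Ioo, Real.volume_Icc] at h4
  rw [← ENNReal.ofReal_sum_of_nonneg] at h4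
  · rw [ENNReal.ofReal_le_ofReal_iff (by norm_num)] at h4
    calc _ = ∑ k ∈ Finset.range K, (b k + m k - (a k + m k)) := by
          apply Finset.sum_congr rfl; intros; ring
      _ ≤ _ := h4
      _ = 1 := by ring
  · intro k hk
    have := hab k (Finset.mem_range.1 hk)
    linarith

namespace CircleDiffeo

/-- conjugation by the reflection -/
noncomputable def refl (f : CircleDiffeo) : CircleDiffeo where
  toFun := fun x => -f.toFun (-x)
  contDiff := (f.contDiff.comp contDiff_neg).neg
  deriv_pos := by
    intro x
    have h : HasDerivAt (fun x => -f.toFun (-x)) (-(deriv f.toFun (-x) * (-1))) x :=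
      ((f.diff (-x)).hasDerivAt.comp x (hasDerivAt_neg x)).neg
    rw [h.deriv]
    have := f.deriv_pos (-x)
    linarith
  commute_translation := by
    intro x
    have := f.commute_translation (-(x + 1))
    rw [show -(x+1) + 1 = -x by ring] at this
    rw [this]; ring

lemma refl_it (f : CircleDiffeo) (n : ℕ) (x : ℝ) : f.refl.toFun^[n] x = -(f.toFun^[n] (-x)) := by
  induction n with
  | zero => simp
  | succ n ih => rw [Function.iterate_succ_apply', Function.iterate_succ_apply', ih]; simp [refl]

lemma refl_rot (f : CircleDiffeo) {α : ℝ} (h : hasRotationNumber f α) :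
    hasRotationNumber f.refl (-α) := by
  unfold hasRotationNumber at *
  have := h.neg
  refine this.congr ?_
  intro n
  rw [refl_it]; simp [neg_div]

lemma sum1 (f : CircleDiffeo) {α : ℝ} (hα : Irrational α) (h : hasRotationNumber f α)
    {u v : ℕ} {p p' : ℤ} (F : Farey α u v p p') (w : ℝ) {K : ℕ} (hK : K ≤ v) :
    ∑ k ∈ Finset.range K, (f.toFun^[k + u] w - p - f.toFun^[k] w) ≤ 1 := by
  have hd := F.hd
  have hd' := F.hd'
  have hone := F.one
  have hv1 : (1:ℝ) ≤ v := by exact_mod_cast F.hv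
  have hu1 : (1:ℝ) ≤ u := by exact_mod_cast F.hu
  have key : ∀ d M : ℤ, 0 < d → d < v → -(u * α - p) < d * α + M → d * α + M < u * α - p → False := by
    intro d M h1 h2 h3 h4
    by_cases h5 : 0 ≤ d * α + M
    · exact F.empty h1 (by omega) (by linarith) h4
    · push Not at h5
      exact F.empty (l := d + u) (M := M - p) (by omega) (by omega) (by push_cast; linarith)
        (by push_cast; linarith)
  refine sum_len K (fun k => f.toFun^[k] w) (fun k => f.toFun^[k + u] w - p) ?_ ?_ ?_
  · intro k _
    have := f.order h w k (k + u) 0 (-p) (by push_cast; linarith)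
    push_cast at this; simpa [sub_eq_add_neg] using this
  · intro k _
    have := f.order h w (k + u) k (-p) 1 (by push_cast; nlinarith)
    push_cast at this; simpa [sub_eq_add_neg] using this.le
  · intro k hk l hl hkl M
    by_contra hcon
    push Not at hcon
    obtain ⟨c1, c2⟩ := hcon
    have c1' := (f.order_iff hα h w l (k + u) M (-p)).1 (by push_cast; linarith)
    have c2' := (f.order_iff hα h w k (l + u) 0 (M - p)).1 (by push_cast; linarith)
    push_cast at c1' c2'
    rcases lt_or_gt_of_ne hkl with hlt | hlt
    · exact key ((l:ℤ) - k) M (by omega) (by omega) (by push_cast; linarith) (by push_cast; linarith)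
    · exact key ((k:ℤ) - l) (-M) (by omega) (by omega) (by push_cast; linarith) (by push_cast; linarith)

lemma sum1' (f : CircleDiffeo) {α : ℝ} (hα : Irrational α) (h : hasRotationNumber f α)
    {u v : ℕ} {p p' : ℤ} (F : Farey α u v p p') (w : ℝ) {K : ℕ} (hK : K ≤ 2 * v) :
    ∑ k ∈ Finset.range K, (f.toFun^[k + u] w - p - f.toFun^[k] w) ≤ 2 := by
  rcases le_total K v with h1 | h1
  · linarith [f.sum1 hα h F w h1]
  · obtain ⟨L, rfl⟩ := Nat.exists_eq_add_of_le h1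
    rw [Finset.sum_range_add]
    have e1 := f.sum1 hα h F w (le_refl v)
    have e2 := f.sum1 hα h F (f.toFun^[v] w) (K := L) (by omega)
    have e3 : ∑ x ∈ Finset.range L, (f.toFun^[v + x + u] w - p - f.toFun^[v + x] w) =
        ∑ k ∈ Finset.range L, (f.toFun^[k + u] (f.toFun^[v] w) - p - f.toFun^[k] (f.toFun^[v] w)) := by
      apply Finset.sum_congr rfl
      intro k _
      rw [← Function.iterate_add_apply, ← Function.iterate_add_apply, add_comm k v,
        show k + u + v = v + k + u by ring]
    linarith

lemma sum2' (f : CircleDiffeo) {α : ℝ} (hα : Irrational α) (h : hasRotationNumber f α)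
    {u v : ℕ} {p p' : ℤ} (F : Farey α u v p p') (w : ℝ) {K : ℕ} (hK : K ≤ 2 * u) :
    ∑ k ∈ Finset.range K, (f.toFun^[k] w - (f.toFun^[k + v] w - p')) ≤ 2 := by
  have := f.refl.sum1' hα.neg (f.refl_rot h) F.swap (-w) hK
  refine le_trans (le_of_eq ?_) this
  apply Finset.sum_congr rfl
  intro k _
  rw [refl_it, refl_it, neg_neg]; push_cast; ring

lemma sum2 (f : CircleDiffeo) {α : ℝ} (hα : Irrational α) (h : hasRotationNumber f α)
    {u v : ℕ} {p p' : ℤ} (F : Farey α u v p p') (w : ℝ) {K : ℕ} (hK : K ≤ u) :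
    ∑ k ∈ Finset.range K, (f.toFun^[k] w - (f.toFun^[k + v] w - p')) ≤ 1 := by
  have := f.refl.sum1 hα.neg (f.refl_rot h) F.swap (-w) hK
  refine le_trans (le_of_eq ?_) this
  apply Finset.sum_congr rfl
  intro k _
  rw [refl_it, refl_it, neg_neg]; push_cast; ring

end CircleDiffeo

namespace CircleDiffeo

/-- log of the derivative -/
noncomputable def phi (f : CircleDiffeo) (x : ℝ) : ℝ := Real.log (deriv f.toFun x)

lemma deriv_cont (f : CircleDiffeo) : Continuous (deriv f.toFun) :=
  f.contDiff.continuous_deriv (by norm_num)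

lemma deriv_per (f : CircleDiffeo) : Function.Periodic (deriv f.toFun) 1 := by
  intro x
  have h : (fun y => f.toFun (y + 1)) = fun y => f.toFun y + 1 := funext f.commute_translation
  have h2 : deriv (fun y => f.toFun (y + 1)) x = deriv f.toFun (x + 1) := by
    rw [deriv_comp_add_const]
  rw [← h2, h, deriv_add_const]

lemma phi_cont (f : CircleDiffeo) : Continuous f.phi :=
  f.deriv_cont.log (fun x => (f.deriv_pos x).ne')

lemma phi_per (f : CircleDiffeo) : Function.Periodic f.phi 1 := by
  intro x; unfold phi; rw [f.deriv_per x]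

lemma phi_int (f : CircleDiffeo) (x : ℝ) (M : ℤ) : f.phi (x + M) = f.phi x := by
  have := f.phi_per.int_mul M x
  simpa using this

lemma phi_bdd (f : CircleDiffeo) : ∃ B : ℝ, 0 < B ∧ ∀ x, |f.phi x| ≤ B := by
  have := f.phi_per.isBounded_of_continuous one_ne_zero f.phi_cont
  obtain ⟨B, hB⟩ := this.exists_norm_le
  refine ⟨max B 1, by positivity, fun x => (hB _ (mem_range_self x)).trans (le_max_left _ _)⟩

lemma modulus (f : CircleDiffeo) (η : ℝ) (hη : 0 < η) :
    ∃ C : ℝ, 0 ≤ C ∧ ∀ a b, |f.phi a - f.phi b| ≤ η + C * |a - b| := by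
  obtain ⟨B, hB0, hB⟩ := f.phi_bdd
  have huc : UniformContinuousOn f.phi (Icc (-1) 2) :=
    isCompact_Icc.uniformContinuousOn_of_continuous f.phi_cont.continuousOn
  rw [Metric.uniformContinuousOn_iff] at huc
  obtain ⟨ρ, hρ, H⟩ := huc η hη
  set r := min ρ 1 with hr
  have hr0 : 0 < r := by positivity
  refine ⟨2 * B / r, by positivity, fun a b => ?_⟩
  by_cases hab : |a - b| < r
  · have h1 : |a - b| < ρ := hab.trans_le (min_le_left _ _)
    have h2 : |a - b| < 1 := hab.trans_le (min_le_right _ _)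
    have ha : f.phi a = f.phi (a + (-⌊a⌋ : ℤ)) := (f.phi_int a _).symm
    have hb : f.phi b = f.phi (b + (-⌊a⌋ : ℤ)) := (f.phi_int b _).symm
    rw [abs_lt] at h2
    have h3 := Int.floor_le a
    have h4 := Int.lt_floor_add_one a
    have := H (a + (-⌊a⌋ : ℤ)) ⟨by push_cast; linarith, by push_cast; linarith⟩
      (b + (-⌊a⌋ : ℤ)) ⟨by push_cast; linarith, by push_cast; linarith⟩
      (by rw [Real.dist_eq]; convert h1 using 2; ring)
    rw [Real.dist_eq, ← ha, ← hb] at this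
    have : 0 ≤ 2 * B / r * |a - b| := by positivity
    linarith
  · push Not at hab
    have h1 : |f.phi a - f.phi b| ≤ 2 * B := by
      have := abs_sub (f.phi a) (f.phi b)
      linarith [hB a, hB b]
    have h2 : 2 * B ≤ 2 * B / r * |a - b| := by
      rw [div_mul_eq_mul_div, le_div_iff₀ hr0]
      gcongr
    linarith

/-- Birkhoff sums -/
noncomputable def S (f : CircleDiffeo) (k : ℕ) (w : ℝ) : ℝ :=
  ∑ i ∈ Finset.range k, f.phi (f.toFun^[i] w)

lemma S_add (f : CircleDiffeo) (k l : ℕ) (w : ℝ) :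
    f.S (k + l) w = f.S k w + f.S l (f.toFun^[k] w) := by
  unfold S
  rw [Finset.sum_range_add]
  congr 1
  apply Finset.sum_congr rfl
  intro i _
  rw [← Function.iterate_add_apply, add_comm]

lemma S_int (f : CircleDiffeo) (k : ℕ) (w : ℝ) (M : ℤ) : f.S k (w + M) = f.S k w := by
  unfold S
  apply Finset.sum_congr rfl
  intro i _
  rw [f.it_add_int, f.phi_int]

lemma S_swap (f : CircleDiffeo) (k u : ℕ) (w : ℝ) :
    f.S u (f.toFun^[k] w) - f.S u w = f.S k (f.toFun^[u] w) - f.S k w := by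
  have h1 := f.S_add k u w
  have h2 := f.S_add u k w
  rw [add_comm u k] at h2
  linarith

lemma it_hasDeriv (f : CircleDiffeo) (k : ℕ) (w : ℝ) :
    HasDerivAt (f.toFun^[k]) (Real.exp (f.S k w)) w := by
  induction k with
  | zero => simp [S]; exact hasDerivAt_id w
  | succ k ih =>
    rw [Function.iterate_succ']
    have h1 := (f.diff (f.toFun^[k] w)).hasDerivAt.comp w ih
    have e : Real.exp (f.S (k + 1) w) = deriv f.toFun (f.toFun^[k] w) * Real.exp (f.S k w) := by
      unfold S
      rw [Finset.sum_range_succ, add_comm, Real.exp_add]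
      unfold phi
      rw [Real.exp_log (f.deriv_pos _)]
    rw [e]
    exact h1

lemma it_mvt (f : CircleDiffeo) (k : ℕ) {a b : ℝ} (hab : a < b) :
    ∃ z ∈ Ioo a b, f.toFun^[k] b - f.toFun^[k] a = Real.exp (f.S k z) * (b - a) := by
  obtain ⟨z, hz, h⟩ := exists_hasDerivAt_eq_slope (f.toFun^[k]) (fun w => Real.exp (f.S k w)) hab
    (f.it_cont k).continuousOn (fun w _ => f.it_hasDeriv k w)
  refine ⟨z, hz, ?_⟩
  rw [h]
  have : b - a ≠ 0 := by linarith
  field_simp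

lemma S_zero (f : CircleDiffeo) (k : ℕ) : ∃ z, f.S k z = 0 := by
  obtain ⟨z, -, h⟩ := f.it_mvt k (zero_lt_one' ℝ)
  refine ⟨z, ?_⟩
  have := f.it_add_int k 0 1
  simp only [zero_add, Int.cast_one] at this
  rw [this] at h
  have h2 : Real.exp (f.S k z) = 1 := by linarith
  simpa using h2

lemma S_dist (f : CircleDiffeo) {η C : ℝ} (hC0 : 0 ≤ C)
    (hC : ∀ a b, |f.phi a - f.phi b| ≤ η + C * |a - b|) (K : ℕ) (a b : ℝ) (B : ℝ)
    (l : ℕ → ℝ) (hl : ∀ k, |f.toFun^[k] a - f.toFun^[k] b| ≤ l k)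
    (hB : ∑ k ∈ Finset.range K, l k ≤ B) :
    |f.S K a - f.S K b| ≤ K * η + C * B := by
  unfold S
  rw [← Finset.sum_sub_distrib]
  calc _ ≤ ∑ k ∈ Finset.range K, |f.phi (f.toFun^[k] a) - f.phi (f.toFun^[k] b)| :=
        Finset.abs_sum_le_sum_abs _ _
    _ ≤ ∑ k ∈ Finset.range K, (η + C * l k) := by
        apply Finset.sum_le_sum
        intro k _
        refine (hC _ _).trans ?_
        have := mul_le_mul_of_nonneg_left (hl k) hC0
        linarith
    _ = K * η + C * ∑ k ∈ Finset.range K, l k := by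
        rw [Finset.sum_add_distrib, ← Finset.mul_sum]; simp
    _ ≤ _ := by
        have := mul_le_mul_of_nonneg_left hB hC0
        linarith

lemma abs_le_len {a b c d : ℝ} (ha : a ∈ Icc c d) (hb : b ∈ Icc c d) : |a - b| ≤ d - c := by
  rw [abs_le]; constructor <;> linarith [ha.1, ha.2, hb.1, hb.2]

lemma dist1 (f : CircleDiffeo) {α : ℝ} (hα : Irrational α) (h : hasRotationNumber f α)
    {u v : ℕ} {p p' : ℤ} (F : Farey α u v p p') {η C : ℝ} (hC0 : 0 ≤ C)
    (hC : ∀ a b, |f.phi a - f.phi b| ≤ η + C * |a - b|) (w : ℝ) {K : ℕ} (hK : K ≤ 2 * v)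
    {a b : ℝ} (ha : a ∈ Icc w (f.toFun^[u] w - p)) (hb : b ∈ Icc w (f.toFun^[u] w - p)) :
    |f.S K a - f.S K b| ≤ K * η + C * 2 := by
  refine f.S_dist hC0 hC K a b 2 _ (fun k => ?_) (f.sum1' hα h F w hK)
  have hm := (f.it_smono k).monotone
  have e : f.toFun^[k + u] w - p = f.toFun^[k] (f.toFun^[u] w - p) := by
    rw [f.it_sub_int, ← Function.iterate_add_apply]
  rw [e]
  exact abs_le_len ⟨hm ha.1, hm ha.2⟩ ⟨hm hb.1, hm hb.2⟩

lemma dist2 (f : CircleDiffeo) {α : ℝ} (hα : Irrational α) (h : hasRotationNumber f α)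
    {u v : ℕ} {p p' : ℤ} (F : Farey α u v p p') {η C : ℝ} (hC0 : 0 ≤ C)
    (hC : ∀ a b, |f.phi a - f.phi b| ≤ η + C * |a - b|) (w : ℝ) {K : ℕ} (hK : K ≤ 2 * u)
    {a b : ℝ} (ha : a ∈ Icc (f.toFun^[v] w - p') w) (hb : b ∈ Icc (f.toFun^[v] w - p') w) :
    |f.S K a - f.S K b| ≤ K * η + C * 2 := by
  refine f.S_dist hC0 hC K a b 2 _ (fun k => ?_) (f.sum2' hα h F w hK)
  have hm := (f.it_smono k).monotone
  have e : f.toFun^[k + v] w - p' = f.toFun^[k] (f.toFun^[v] w - p') := by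
    rw [f.it_sub_int, ← Function.iterate_add_apply]
  rw [e]
  exact abs_le_len ⟨hm ha.1, hm ha.2⟩ ⟨hm hb.1, hm hb.2⟩

/-- The intervals of the dynamical partition cover the circle. -/
lemma cover (f : CircleDiffeo) {α : ℝ} (h : hasRotationNumber f α)
    {u v : ℕ} {p p' : ℤ} (F : Farey α u v p p') (w z : ℝ) :
    ∃ k : ℕ, ∃ M : ℤ,
      (k < v ∧ z + M ∈ Icc (f.toFun^[k] w) (f.toFun^[u] (f.toFun^[k] w) - p)) ∨
      (k < u ∧ z + M ∈ Icc (f.toFun^[v] (f.toFun^[k] w) - p') (f.toFun^[k] w)) := by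
  have hd := F.hd
  have hd' := F.hd'
  have hne : (Finset.range (u + v)).Nonempty := ⟨0, by have := F.hu; simp; omega⟩
  obtain ⟨k, hk, hmax⟩ := Finset.exists_max_image (Finset.range (u + v))
    (fun k => f.toFun^[k] w + ⌊z - f.toFun^[k] w⌋) hne
  rw [Finset.mem_range] at hk
  have hle : ∀ l < u + v, ∀ M : ℤ, f.toFun^[l] w + M ≤ z →
      f.toFun^[l] w + M ≤ f.toFun^[k] w + ⌊z - f.toFun^[k] w⌋ := by
    intro l hl M hM
    refine le_trans ?_ (hmax l (Finset.mem_range.2 hl))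
    have : M ≤ ⌊z - f.toFun^[l] w⌋ := Int.le_floor.2 (by linarith)
    have : (M:ℝ) ≤ ⌊z - f.toFun^[l] w⌋ := by exact_mod_cast this
    linarith
  have hf1 := Int.floor_le (z - f.toFun^[k] w)
  set m := ⌊z - f.toFun^[k] w⌋
  by_cases hkv : k < v
  · refine ⟨k, -m, Or.inl ⟨hkv, by push_cast; linarith, ?_⟩⟩
    by_contra hcon
    push Not at hcon
    rw [← Function.iterate_add_apply] at hcon
    have h1 := hle (u + k) (by omega) (m - p) (by push_cast at hcon ⊢; linarith)
    have h2 := f.order h w k (u + k) m (m - p) (by push_cast; linarith)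
    linarith
  · obtain ⟨l, rfl⟩ := Nat.exists_eq_add_of_le (not_lt.1 hkv)
    refine ⟨l, -m - p', Or.inr ⟨by omega, ?_, ?_⟩⟩
    · rw [← Function.iterate_add_apply]; push_cast; linarith
    · by_contra hcon
      push Not at hcon
      have h1 := hle l (by omega) (m + p') (by push_cast at hcon ⊢; linarith)
      have h2 := f.order h w (v + l) l m (m + p') (by push_cast; linarith)
      linarith

lemma S_small (f : CircleDiffeo) {α : ℝ} (hα : Irrational α) (h : hasRotationNumber f α)
    {u v : ℕ} {p p' : ℤ} (F : Farey α u v p p') {η C : ℝ} (hη : 0 < η) (hC0 : 0 ≤ C)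
    (hC : ∀ a b, |f.phi a - f.phi b| ≤ η + C * |a - b|) (huv : u ≤ 2 * v) (hvu : v ≤ 2 * u)
    (w : ℝ) : |f.S u w| ≤ 3 * u * η + 4 * C := by
  obtain ⟨z, hz⟩ := f.S_zero u
  obtain ⟨k, M, hk⟩ := f.cover h F w z
  have hzM : f.S u (z + M) = 0 := by rw [S_int, hz]
  have hd := F.hd
  have hd' := F.hd'
  have hlt1 : ∀ w, w ≤ f.toFun^[u] w - p := by
    intro w
    have := f.order h w 0 u 0 (-p) (by push_cast; linarith)
    push_cast at this; simp at this; linarith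
  have hlt2 : ∀ w, f.toFun^[v] w - p' ≤ w := by
    intro w
    have := f.order h w v 0 (-p') 0 (by push_cast; linarith)
    push_cast at this; simp at this; linarith
  have h1 : |f.S u (f.toFun^[k] w)| ≤ u * η + C * 2 := by
    rcases hk with ⟨hk, hz⟩ | ⟨hk, hz⟩
    · have := f.dist1 hα h F hC0 hC (f.toFun^[k] w) huv hz ⟨le_rfl, hlt1 _⟩
      rw [hzM] at this; simpa using this
    · have := f.dist2 hα h F hC0 hC (f.toFun^[k] w) (K := u) (by omega) hz ⟨hlt2 _, le_rfl⟩
      rw [hzM] at this; simpa using this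
  have hku : k ≤ 2 * u := by rcases hk with ⟨hk, -⟩ | ⟨hk, -⟩ <;> omega
  have hkv : k ≤ 2 * v := by rcases hk with ⟨hk, -⟩ | ⟨hk, -⟩ <;> omega
  have h2 : |f.S u (f.toFun^[k] w) - f.S u w| ≤ k * η + C * 2 := by
    rw [S_swap]
    have := f.dist1 hα h F hC0 hC w hkv (a := f.toFun^[u] w - p) (b := w)
      ⟨hlt1 _, le_rfl⟩ ⟨le_rfl, hlt1 _⟩
    have e : f.S k (f.toFun^[u] w - p) = f.S k (f.toFun^[u] w) := by
      have := f.S_int k (f.toFun^[u] w) (-p)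
      push_cast at this; simpa [sub_eq_add_neg] using this
    rwa [e] at this
  have h3 : (k:ℝ) ≤ 2 * u := by exact_mod_cast hku
  have h4 : k * η ≤ 2 * u * η := by gcongr
  rw [abs_le] at *
  constructor <;> linarith [h1.1, h1.2, h2.1, h2.2]

/-- Subexponential growth of derivatives. -/
lemma growth (f : CircleDiffeo) {α : ℝ} (hα : Irrational α) (h : hasRotationNumber f α)
    (η : ℝ) (hη : 0 < η) : ∃ C : ℝ, 0 ≤ C ∧ ∀ k w, |f.S k w| ≤ η * k + C := by
  obtain ⟨C, hC0, hC⟩ := f.modulus (η / 6) (by positivity)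
  obtain ⟨B, hB0, hB⟩ := f.phi_bdd
  obtain ⟨N, hN⟩ := exists_nat_ge (8 * C / η)
  obtain ⟨u, v, p, p', F, hu, hv, huv, hvu⟩ := Farey.large hα N
  have hs : ∀ w, |f.S u w| ≤ η * u := by
    intro w
    have h1 := f.S_small hα h F (by positivity) hC0 hC huv hvu w
    have h2 : 8 * C / η ≤ u := hN.trans (by exact_mod_cast hu)
    rw [div_le_iff₀ hη] at h2
    linarith
  have hb : ∀ k w, |f.S k w| ≤ B * k := by
    intro k w
    unfold S
    calc _ ≤ ∑ i ∈ Finset.range k, |f.phi (f.toFun^[i] w)| := Finset.abs_sum_le_sum_abs _ _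
      _ ≤ ∑ i ∈ Finset.range k, B := Finset.sum_le_sum (fun i _ => hB _)
      _ = B * k := by simp [mul_comm]
  refine ⟨B * u, by positivity, fun k => ?_⟩
  induction k using Nat.strong_induction_on with
  | _ k ih =>
    intro w
    rcases lt_or_ge k u with hk | hk
    · have h1 := hb k w
      have h2 : (k:ℝ) ≤ u := by exact_mod_cast hk.le
      have h3 : B * k ≤ B * u := by gcongr
      have : 0 ≤ η * k := by positivity
      linarith
    · obtain ⟨l, rfl⟩ := Nat.exists_eq_add_of_le hk
      have h1 := ih l (by have := F.hu; omega) (f.toFun^[u] w)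
      have h2 := hs w
      rw [S_add]
      push_cast
      refine (abs_add_le _ _).trans ?_
      linarith

end CircleDiffeo

namespace CircleDiffeo

lemma log_ratio {X Y a : ℝ} (hX : 0 < X) (hY : 0 < Y) (h1 : X ≤ 2 * Real.exp a * Y)
    (h2 : Y ≤ 2 * Real.exp a * X) : |Real.log (X / Y)| ≤ a + 1 := by
  have h2e : (2:ℝ) ≤ Real.exp 1 := by have := Real.add_one_le_exp (1:ℝ); linarith
  have he : 2 * Real.exp a ≤ Real.exp (a + 1) := by
    rw [Real.exp_add, mul_comm]
    gcongr
  rw [abs_le]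
  constructor
  · rw [Real.le_log_iff_exp_le (by positivity), Real.exp_neg, le_div_iff₀ hY]
    rw [inv_mul_le_iff₀ (Real.exp_pos _)]
    refine h2.trans ?_
    gcongr
  · rw [Real.log_le_iff_le_exp (by positivity), div_le_iff₀ hY]
    refine h1.trans ?_
    gcongr

lemma it_len (f : CircleDiffeo) (k : ℕ) {E : ℝ} (hE : ∀ w, |f.S k w| ≤ E) {a b : ℝ} (hab : a < b) :
    f.toFun^[k] b - f.toFun^[k] a ≤ Real.exp E * (b - a) ∧
    b - a ≤ Real.exp E * (f.toFun^[k] b - f.toFun^[k] a) := by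
  obtain ⟨z, -, h⟩ := f.it_mvt k hab
  have h1 := abs_le.1 (hE z)
  have hba : 0 < b - a := by linarith
  rw [h]
  constructor
  · have := Real.exp_le_exp.2 h1.2
    gcongr
  · rw [← mul_assoc, ← Real.exp_add]
    have : 1 ≤ Real.exp (E + f.S k z) := Real.one_le_exp (by linarith)
    nlinarith

/-- ratio of the initial triple -/
noncomputable def rat1 (f : CircleDiffeo) (u v : ℕ) (p p' : ℤ) (w : ℝ) : ℝ :=
  (w - (f.toFun^[v] w - p')) / (f.toFun^[u] w - p - w)


lemma lt_u (f : CircleDiffeo) {α : ℝ} (h : hasRotationNumber f α)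
    {u v : ℕ} {p p' : ℤ} (F : Farey α u v p p')
    (w : ℝ) : w < f.toFun^[u] w - p := by
  have hd := F.hd
  have := f.order h w 0 u 0 (-p) (by push_cast; linarith)
  push_cast at this; simp at this; linarith

lemma lt_v (f : CircleDiffeo) {α : ℝ} (h : hasRotationNumber f α)
    {u v : ℕ} {p p' : ℤ} (F : Farey α u v p p')
    (w : ℝ) : f.toFun^[v] w - p' < w := by
  have hd' := F.hd'
  have := f.order h w v 0 (-p') 0 (by push_cast; linarith)
  push_cast at this; simp at this; linarith

lemma ratio1 (f : CircleDiffeo) {α : ℝ} (h : hasRotationNumber f α)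
    {u v : ℕ} {p p' : ℤ} (F : Farey α u v p p')
    (G : Farey.G1 α u v p p') {E : ℝ} (hE0 : 0 ≤ E) (hE : ∀ w, |f.S u w| ≤ E)
    (hE2 : ∀ w, |f.S (2 * u) w| ≤ 2 * E) (w : ℝ) : |Real.log (f.rat1 u v p p' w)| ≤ 3 * E + 1 := by
  obtain ⟨g1, g2, -⟩ := G
  have hJ := f.lt_u h F w
  have hI := f.lt_v h F w
  have a1 := (f.it_len u hE hI).1
  have a2 := (f.it_len (2 * u) hE2 hI).2
  have a3 := (f.it_len u hE hJ).1
  rw [f.it_sub_int, ← Function.iterate_add_apply] at a1 a2 a3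
  have b1 := f.order h w (u + v) 0 (-p') p (by push_cast; linarith)
  have b2 := f.order h w 0 (2 * u + v) (2 * p) (-p') (by push_cast; linarith)
  push_cast at b1 b2
  simp only [Function.iterate_zero, id_eq] at b1 b2
  rw [← two_mul u] at a3
  have e1 : (1:ℝ) ≤ Real.exp E := Real.one_le_exp hE0
  have e2 : Real.exp (2 * E) = Real.exp E * Real.exp E := by rw [← Real.exp_add]; ring_nf
  have e3 : Real.exp (3 * E) = Real.exp E * Real.exp E * Real.exp E := by
    rw [← Real.exp_add, ← Real.exp_add]; ring_nf
  unfold rat1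
  set I := w - (f.toFun^[v] w - p') with hIdef
  set J := f.toFun^[u] w - p - w with hJdef
  have hI0 : 0 < I := by linarith
  have hJ0 : 0 < J := by linarith
  set e := Real.exp E
  apply log_ratio hI0 hJ0
  · rw [e3]
    have c1 : f.toFun^[2 * u] w - (f.toFun^[2 * u + v] w - p') ≤ J + e * J := by linarith
    rw [e2] at a2
    calc I ≤ e * e * (J + e * J) := a2.trans (by gcongr)
      _ ≤ e * e * (e * J + e * J) := by gcongr; nlinarith
      _ = _ := by ring
  · rw [e3]
    have c1 : J ≤ e * I := by linarith
    refine c1.trans ?_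
    have : e ≤ 2 * (e * e * e) := by nlinarith [mul_le_mul e1 e1 zero_le_one (by linarith)]
    gcongr

lemma ratio2 (f : CircleDiffeo) {α : ℝ} (h : hasRotationNumber f α)
    {u v : ℕ} {p p' : ℤ} (F : Farey α u v p p')
    (G : Farey.G1 α u v p p') {E : ℝ} (hE0 : 0 ≤ E) (hE : ∀ w, |f.S u w| ≤ E)
    (hE2 : ∀ w, |f.S (2 * u) w| ≤ 2 * E) (c e1 e2 : ℝ) (he1 : f.toFun^[u] e1 = c)
    (he2 : f.toFun^[v] e2 = c) :
    |Real.log ((c - (e1 + p)) / (e2 + p' - c))| ≤ 3 * E + 1 := by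
  obtain ⟨g1, g2, -⟩ := G
  have hJ : e1 + p < c := by have := f.lt_u h F e1; rw [he1] at this; linarith
  have hI : c < e2 + p' := by have := f.lt_v h F e2; rw [he2] at this; linarith
  have a1 := (f.it_len u hE hJ).2
  have a2 := (f.it_len u hE hJ).1
  have a3 := (f.it_len (2 * u) hE2 hJ).1
  rw [f.it_add_int, he1] at a1 a2
  rw [f.it_add_int, two_mul, Function.iterate_add_apply _ u u e1, he1] at a3
  have b1 : f.toFun^[u] c - p < e2 + p' := by
    apply (f.it_smono v).lt_iff_lt.1
    rw [f.it_sub_int, f.it_add_int, he2, ← Function.iterate_add_apply]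
    have := f.order h c (v + u) 0 (-p) p' (by push_cast; linarith)
    push_cast at this; simp only [Function.iterate_zero, id_eq] at this; linarith
  have b2 : e2 + p' < f.toFun^[u + u] c - (2 * p : ℤ) := by
    apply (f.it_smono v).lt_iff_lt.1
    rw [f.it_sub_int, f.it_add_int, he2, ← Function.iterate_add_apply]
    have := f.order h c 0 (v + (u + u)) (p') (-(2 * p)) (by push_cast; linarith)
    push_cast at this ⊢; simp only [Function.iterate_zero, id_eq] at this; linarith
  push_cast at b2
  have e1' : (1:ℝ) ≤ Real.exp E := Real.one_le_exp hE0
  have e2' : Real.exp (2 * E) = Real.exp E * Real.exp E := by rw [← Real.exp_add]; ring_nf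
  have e3' : Real.exp (3 * E) = Real.exp E * Real.exp E * Real.exp E := by
    rw [← Real.exp_add, ← Real.exp_add]; ring_nf
  set I := e2 + p' - c with hIdef
  set J := c - (e1 + p) with hJdef
  have hI0 : 0 < I := by linarith
  have hJ0 : 0 < J := by linarith
  rw [e2'] at a3
  set e := Real.exp E
  have hee : 1 ≤ e * e := by nlinarith
  apply log_ratio hJ0 hI0
  · rw [e3']
    have c1 : J ≤ e * I := a1.trans (by gcongr; linarith)
    refine c1.trans ?_
    have : e ≤ 2 * (e * e * e) := by nlinarith
    gcongr
  · rw [e3']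
    have c1 : I ≤ e * J + e * e * J := by linarith
    refine c1.trans ?_
    have : e + e * e ≤ 2 * (e * e * e) := by nlinarith
    nlinarith

lemma refl_rat1 (f : CircleDiffeo) (u v : ℕ) (p p' : ℤ) (w : ℝ) :
    f.refl.rat1 v u (-p') (-p) (-w) = (f.rat1 u v p p' w)⁻¹ := by
  unfold rat1
  rw [refl_it, refl_it, neg_neg, inv_div]
  push_cast
  congr 1 <;> ring

lemma ratio_bound (f : CircleDiffeo) {α : ℝ} (hα : Irrational α) (h : hasRotationNumber f α)
    (η : ℝ) (hη : 0 < η) : ∃ C : ℝ, 0 ≤ C ∧ ∀ (u v : ℕ) (p p' : ℤ), Farey α u v p p' →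
      (Farey.G1 α u v p p' ∨ Farey.G2 α u v p p') →
      (∀ w, |Real.log (f.rat1 u v p p' w)| ≤ η * (min u v : ℕ) + C) ∧
      (∀ c e1 e2 : ℝ, f.toFun^[u] e1 = c → f.toFun^[v] e2 = c →
        |Real.log ((c - (e1 + p)) / (e2 + p' - c))| ≤ η * (min u v : ℕ) + C) := by
  obtain ⟨C1, hC10, hC1⟩ := f.growth hα h (η / 6) (by positivity)
  obtain ⟨C2, hC20, hC2⟩ := f.refl.growth hα.neg (f.refl_rot h) (η / 6) (by positivity)
  refine ⟨3 * (C1 + C2) + 1, by positivity, ?_⟩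
  intro u v p p' F G
  rcases G with G | G
  · have hE0 : 0 ≤ η / 6 * u + C1 := by positivity
    have hE : ∀ w, |f.S u w| ≤ η / 6 * u + C1 := hC1 u
    have hE2 : ∀ w, |f.S (2 * u) w| ≤ 2 * (η / 6 * u + C1) := by
      intro w
      refine (hC1 (2 * u) w).trans ?_
      push_cast; linarith
    have hm : (u:ℝ) ≤ 2 * (min u v : ℕ) := by
      have := G.2.2
      exact_mod_cast (by omega : u ≤ 2 * min u v)
    have hb : 3 * (η / 6 * u + C1) + 1 ≤ η * (min u v : ℕ) + (3 * (C1 + C2) + 1) := by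
      nlinarith
    exact ⟨fun w => (f.ratio1 h F G hE0 hE hE2 w).trans hb,
      fun c e1 e2 h1 h2 => (f.ratio2 h F G hE0 hE hE2 c e1 e2 h1 h2).trans hb⟩
  · have hE0 : 0 ≤ η / 6 * v + C2 := by positivity
    have hE : ∀ w, |f.refl.S v w| ≤ η / 6 * v + C2 := hC2 v
    have hE2 : ∀ w, |f.refl.S (2 * v) w| ≤ 2 * (η / 6 * v + C2) := by
      intro w
      refine (hC2 (2 * v) w).trans ?_
      push_cast; linarith
    have hm : (v:ℝ) ≤ 2 * (min u v : ℕ) := by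
      have := G.2.2
      exact_mod_cast (by omega : v ≤ 2 * min u v)
    have hb : 3 * (η / 6 * v + C2) + 1 ≤ η * (min u v : ℕ) + (3 * (C1 + C2) + 1) := by
      nlinarith
    refine ⟨fun w => ?_, fun c e1 e2 h1 h2 => ?_⟩
    · have := f.refl.ratio1 (f.refl_rot h) F.swap (Farey.swap_G'.1 G) hE0 hE hE2 (-w)
      rw [refl_rat1, Real.log_inv, abs_neg] at this
      exact this.trans hb
    · have := f.refl.ratio2 (f.refl_rot h) F.swap (Farey.swap_G'.1 G) hE0 hE hE2 (-c) (-e2) (-e1)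
        (by rw [refl_it, neg_neg, h2]) (by rw [refl_it, neg_neg, h1])
      have e : (-c - (-e2 + ((-p' : ℤ):ℝ))) / (-e1 + ((-p:ℤ):ℝ) - -c) =
          ((c - (e1 + p)) / (e2 + p' - c))⁻¹ := by
        rw [inv_div]; push_cast; congr 1 <;> ring
      rw [e, Real.log_inv, abs_neg] at this
      exact this.trans hb

end CircleDiffeo

lemma inArc_iff {a w b : ℝ} :
    inArc a w b ↔ ∃ M M' : ℤ, a < w + M ∧ w + M < b + M' ∧ b + M' < a + 1 := by
  unfold inArc
  constructor
  · rintro ⟨h1, h2⟩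
    have e1 := Int.fract_add_floor (w - a)
    have e2 := Int.fract_add_floor (b - a)
    have e3 := Int.fract_lt_one (b - a)
    refine ⟨-⌊w - a⌋, -⌊b - a⌋, ?_, ?_, ?_⟩ <;> push_cast <;> linarith
  · rintro ⟨M, M', h1, h2, h3⟩
    have e1 : Int.fract (w - a) = w + M - a := by
      rw [Int.fract_eq_iff]
      exact ⟨by linarith, by linarith, -M, by push_cast; ring⟩
    have e2 : Int.fract (b - a) = b + M' - a := by
      rw [Int.fract_eq_iff]
      exact ⟨by linarith, by linarith, -M', by push_cast; ring⟩
    rw [e1, e2]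
    constructor <;> linarith

/-- the finite sequence `q` is ordered like the rotation orbit -/
def OP (α : ℝ) (q : ℕ → ℝ) (n : ℕ) : Prop :=
  ∀ k ≤ n, ∀ l ≤ n, ∀ M : ℤ, k * α + M < l * α → q k + M < q l

lemma OP.conv {α : ℝ} (hα : Irrational α) {q : ℕ → ℝ} {n : ℕ} (h : OP α q n) {k l : ℕ}
    (hk : k ≤ n) (hl : l ≤ n) {M : ℤ} (hq : q k + M < q l) : k * α + M < l * α := by
  by_contra hc
  rcases (not_lt.1 hc).lt_or_eq with h1 | h1
  · have := h l hl k hk (-M) (by push_cast; linarith)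
    push_cast at this
    linarith
  · obtain ⟨a, b⟩ := _root_.irr_eq hα (k := l) (l := k) (M := 0) (N := M) (by push_cast; linarith)
    subst a; rw [← b] at hq; simp at hq

lemma CircleDiffeo.hOP (f : CircleDiffeo) {α : ℝ} (h : hasRotationNumber f α) (x : ℝ) (n : ℕ) :
    OP α (fun k => f.toFun^[k] x) n := by
  intro k _ l _ M hM
  have := f.order h x k l M 0 (by push_cast; linarith)
  push_cast at this
  linarith

lemma int_unique {a : ℝ} {M N : ℤ} (h1 : 0 < a + M) (h2 : a + M < 1) (h3 : 0 < a + N)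
    (h4 : a + N < 1) : M = N := by
  have a1 : (M:ℝ) < N + 1 := by linarith
  have a2 : (N:ℝ) < M + 1 := by linarith
  have a1 : M < N + 1 := by exact_mod_cast a1
  have a2 : N < M + 1 := by exact_mod_cast a2
  omega

lemma adapt {α : ℝ} (hα : Irrational α) {u v : ℕ} {p p' : ℤ} (F : Farey α u v p p')
    {n : ℕ} (hu : 2 ≤ u) (hun : u < n) (hvn : v < n) (hn : n + 1 < u + v) {G : ℝ → ℝ} {x : ℝ}
    (h : OP α (fun k => G^[k] x) n) : IsAdaptedSeg G x n (n - u) (n - v) := by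
  have hv1 := F.hv
  have hd := F.hd
  have hd' := F.hd'
  have h1 := F.lt_one hu
  have eu : n - (n - u) = u := by omega
  have ev : n - (n - v) = v := by omega
  have cu : ((n - u : ℕ) : ℝ) = n - u := by push_cast [Nat.cast_sub hun.le]; ring
  have cv : ((n - v : ℕ) : ℝ) = n - v := by push_cast [Nat.cast_sub hvn.le]; ring
  refine ⟨by omega, by omega, by omega, by omega, ?_, ?_, ?_, ?_, by omega⟩
  · rw [eu, ev, inArc_iff]
    have b1 := h v hvn.le 0 (by omega) (-p') (by push_cast; linarith)
    have b2 := h 0 (by omega) u hun.le p (by push_cast; linarith)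
    have b3 := h u hun.le v hvn.le (p' - p - 1) (by push_cast; linarith)
    simp only [Function.iterate_zero, id_eq] at b1 b2 b3
    push_cast at b1 b2 b3
    refine ⟨p', p' - p, ?_, ?_, ?_⟩ <;> push_cast <;> linarith
  · intro k hk hin
    rw [eu, ev, inArc_iff] at hin
    obtain ⟨M, M', a1, a2, a3⟩ := hin
    have b1 := h.conv hα hvn.le hk (M := -M) (by push_cast; linarith)
    have b2 := h.conv hα hk hun.le (M := M - M') (by push_cast; linarith)
    have b3 := h.conv hα hun.le hvn.le (M := M' - 1) (by push_cast; linarith)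
    push_cast at b1 b2 b3
    have e : M' = p' - p := int_unique (a := u * α - v * α) (by linarith) (by linarith)
      (by push_cast; linarith) (by push_cast; linarith)
    have hk0 : k = 0 := by
      by_contra hk0
      subst e
      push_cast at b1 b2 b3
      exact F.empty (l := k) (M := M - p') (by omega) (by omega) (by push_cast; linarith)
        (by push_cast; linarith)
    subst hk0; simp
  · rw [inArc_iff]
    have b1 := h (n - u) (by omega) n le_rfl p (by rw [cu]; linarith)
    have b2 := h n le_rfl (n - v) (by omega) (-p') (by rw [cv]; push_cast; linarith)
    have b3 := h (n - v) (by omega) (n - u) (by omega) (p' - p - 1) (by rw [cu, cv]; push_cast; linarith)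
    push_cast at b1 b2 b3
    refine ⟨-p, p' - p, ?_, ?_, ?_⟩ <;> push_cast <;> linarith
  · intro k hk hin
    rw [inArc_iff] at hin
    obtain ⟨M, M', a1, a2, a3⟩ := hin
    have b1 := h.conv hα (show n - u ≤ n by omega) hk (M := -M) (by push_cast; linarith)
    have b2 := h.conv hα hk (show n - v ≤ n by omega) (M := M - M') (by push_cast; linarith)
    have b3 := h.conv hα (show n - v ≤ n by omega) (show n - u ≤ n by omega) (M := M' - 1)
      (by push_cast; linarith)
    rw [cu] at b1 b3
    rw [cv] at b2 b3
    push_cast at b1 b2 b3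
    have e : M' = p' - p := int_unique (a := u * α - v * α) (by linarith) (by linarith)
      (by push_cast; linarith) (by push_cast; linarith)
    have hk0 : k = n := by
      by_contra hk0
      subst e
      push_cast at b1 b2 b3
      exact F.empty (l := n - k) (M := -(M + p)) (by omega) (by omega) (by push_cast; linarith)
        (by push_cast; linarith)
    subst hk0; simp

lemma fract_int {a : ℝ} (M : ℤ) (h1 : 0 ≤ a + M) (h2 : a + M < 1) : Int.fract a = a + M := by
  rw [Int.fract_eq_iff]
  exact ⟨h1, h2, -M, by push_cast; ring⟩

lemma ratios {α : ℝ} {u v : ℕ} {p p' : ℤ} (F : Farey α u v p p')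
    {n : ℕ} (hu : 2 ≤ u) (hun : u < n) (hvn : v < n) {G : ℝ → ℝ} {x : ℝ}
    (h : OP α (fun k => G^[k] x) n) :
    initialRatio G x n (n - u) (n - v) = (x - (G^[v] x - p')) / (G^[u] x - p - x) ∧
    finalRatio G x n (n - u) (n - v) =
      (G^[n] x - (G^[n-u] x + p)) / (G^[n-v] x + p' - G^[n] x) ∧
    0 < x - (G^[v] x - p') ∧ 0 < G^[u] x - p - x ∧
    0 < G^[n] x - (G^[n-u] x + p) ∧ 0 < G^[n-v] x + p' - G^[n] x := by
  have hd := F.hd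
  have hd' := F.hd'
  have h1 := F.lt_one hu
  have eu : n - (n - u) = u := by omega
  have ev : n - (n - v) = v := by omega
  have cu : ((n - u : ℕ) : ℝ) = n - u := by push_cast [Nat.cast_sub hun.le]; ring
  have cv : ((n - v : ℕ) : ℝ) = n - v := by push_cast [Nat.cast_sub hvn.le]; ring
  have b1 := h v hvn.le 0 (by omega) (-p') (by push_cast; linarith)
  have b2 := h 0 (by omega) u hun.le p (by push_cast; linarith)
  have b3 := h u hun.le v hvn.le (p' - p - 1) (by push_cast; linarith)
  simp only [Function.iterate_zero, id_eq] at b1 b2 b3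
  push_cast at b1 b2 b3
  have c1 := h (n - u) (by omega) n le_rfl p (by rw [cu]; linarith)
  have c2 := h n le_rfl (n - v) (by omega) (-p') (by rw [cv]; push_cast; linarith)
  have c3 := h (n - v) (by omega) (n - u) (by omega) (p' - p - 1) (by rw [cu, cv]; push_cast; linarith)
  push_cast at c1 c2 c3
  refine ⟨?_, ?_, by linarith, by linarith, by linarith, by linarith⟩
  · unfold initialRatio
    rw [eu, ev, fract_int p' (by linarith) (by linarith),
      fract_int (-p) (by push_cast; linarith) (by push_cast; linarith)]
    push_cast
    congr 1 <;> ring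
  · unfold finalRatio
    rw [fract_int (-p) (by push_cast; linarith) (by push_cast; linarith),
      fract_int p' (by push_cast; linarith) (by push_cast; linarith)]
    push_cast
    congr 1 <;> ring

/-- A degree-one monotone homeomorphism of the line, steep near the integers. -/
noncomputable def Lam (N : ℕ) (t : ℝ) : ℝ := ⌊t⌋ + (Int.fract t) ^ N

lemma Lam_cont (N : ℕ) (hN : 1 ≤ N) : Continuous (Lam N) := by
  have e : Lam N = fun t => t + ((Int.fract t) ^ N - Int.fract t) := by
    funext t
    unfold Lam
    have := Int.fract_add_floor t
    linarith
  rw [e]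
  have hc : Continuous ((fun s : ℝ => s ^ N - s) ∘ Int.fract) := by
    apply ContinuousOn.comp_fract''
    · fun_prop
    · simp; omega
  exact continuous_id.add hc

lemma Lam_mono (N : ℕ) (hN : 1 ≤ N) : StrictMono (Lam N) := by
  intro s t hst
  unfold Lam
  rcases (Int.floor_mono hst.le).eq_or_lt with h | h
  · have hf : Int.fract s < Int.fract t := by
      unfold Int.fract; rw [h]; linarith
    have := pow_lt_pow_left₀ hf (Int.fract_nonneg s) (by omega : N ≠ 0)
    rw [h]; linarith
  · have h1 : (⌊s⌋:ℝ) + 1 ≤ ⌊t⌋ := by exact_mod_cast h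
    have h2 : Int.fract s ^ N < 1 := pow_lt_one₀ (Int.fract_nonneg s) (Int.fract_lt_one s) (by omega)
    have h3 : 0 ≤ Int.fract t ^ N := pow_nonneg (Int.fract_nonneg t) N
    linarith

lemma Lam_add_one (N : ℕ) (t : ℝ) : Lam N (t + 1) = Lam N t + 1 := by
  unfold Lam
  rw [Int.floor_add_one, Int.fract_add_one]; push_cast; ring

lemma similar {p q : ℕ → ℝ} {n : ℕ}
    (h : ∀ k ≤ n, ∀ l ≤ n, ∀ M : ℤ, p k + M < p l → q k + M < q l)
    (h' : ∀ k ≤ n, ∀ l ≤ n, ∀ M : ℤ, p k + M = p l → q k + M = q l) : SimilarlyOrdered p q n := by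
  have hN : ∀ᶠ N : ℕ in atTop, ∀ k ∈ Finset.range (n+1), ∀ l ∈ Finset.range (n+1),
      q k + Lam N (p l - p k) ≤ q l := by
    rw [Filter.eventually_all_finset]
    intro k hk
    rw [Filter.eventually_all_finset]
    intro l hl
    have hk : k ≤ n := by simpa [Nat.lt_succ_iff] using hk
    have hl : l ≤ n := by simpa [Nat.lt_succ_iff] using hl
    have e := Int.fract_add_floor (p l - p k)
    rcases (Int.fract_nonneg (p l - p k)).eq_or_lt with h0 | h0
    · filter_upwards [eventually_ge_atTop 1] with N hN
      unfold Lam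
      rw [← h0, zero_pow (by omega)]
      have := h' k hk l hl ⌊p l - p k⌋ (by linarith)
      linarith
    · have := h k hk l hl ⌊p l - p k⌋ (by linarith)
      have ht := tendsto_pow_atTop_nhds_zero_of_lt_one h0.le (Int.fract_lt_one (p l - p k))
      filter_upwards [ht.eventually (gt_mem_nhds (show 0 < q l - q k - ⌊p l - p k⌋ by linarith))]
        with N hN
      unfold Lam
      linarith
  obtain ⟨N, hN, hN1⟩ := (hN.and (eventually_ge_atTop 1)).exists
  have hne : (Finset.range (n+1)).Nonempty := ⟨0, by simp⟩
  have hle : ∀ (z : ℝ) k, k ∈ Finset.range (n+1) → q k + Lam N (z - p k) ≤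
    (Finset.range (n+1)).sup' hne (fun k => q k + Lam N (z - p k)) := fun z k hk =>
      Finset.le_sup' (fun k => q k + Lam N (z - p k)) hk
  refine ⟨fun z => (Finset.range (n+1)).sup' hne (fun k => q k + Lam N (z - p k)), ?_, ?_, ?_, ?_⟩
  · apply Continuous.finset_sup'_apply
    intro k _
    exact continuous_const.add ((Lam_cont N hN1).comp (continuous_id.sub continuous_const))
  · intro s t hst
    simp only
    rw [Finset.sup'_lt_iff]
    intro k hk
    refine lt_of_lt_of_le ?_ (hle t k hk)
    have := Lam_mono N hN1 (show s - p k < t - p k by linarith)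
    linarith
  · intro z
    have e : ∀ k, Lam N (z + 1 - p k) = Lam N (z - p k) + 1 := by
      intro k; rw [← Lam_add_one]; congr 1; ring
    apply le_antisymm
    · apply Finset.sup'_le
      intro k hk
      have := hle z k hk
      rw [e]; linarith
    · rw [← le_sub_iff_add_le]
      apply Finset.sup'_le
      intro k hk
      have := hle (z + 1) k hk
      rw [e] at this; linarith
  · intro l hl
    have hl : l ∈ Finset.range (n+1) := by simpa [Nat.lt_succ_iff] using hl
    have e : (Finset.range (n+1)).sup' hne (fun k => q k + Lam N (p l - p k)) = q l := by
      apply le_antisymm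
      · apply Finset.sup'_le
        intro k hk
        exact hN k hk l hl
      · have := hle (p l) l hl
        simp only [sub_self] at this
        have e0 : Lam N 0 = 0 := by simp [Lam]; omega
        rw [e0] at this; linarith
    simp only [e, sub_self, Int.fract_zero]

lemma OP.similar {α : ℝ} (hα : Irrational α) {p q : ℕ → ℝ} {n : ℕ} (hp : OP α p n) (hq : OP α q n) :
    SimilarlyOrdered p q n := by
  apply _root_.similar
  · intro k hk l hl M hM
    exact hq k hk l hl M (hp.conv hα hk hl hM)
  · intro k hk l hl M hM
    rcases lt_trichotomy (k * α + M) (l * α) with h | h | h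
    · exact absurd hM (hp k hk l hl M h).ne
    · obtain ⟨a, b⟩ := irr_eq hα (k := k) (l := l) (M := M) (N := 0) (by push_cast; linarith)
      subst a b; simp
    · have := hp l hl k hk (-M) (by push_cast; linarith)
      push_cast at this
      linarith

lemma hasDerivAt_pp (x : ℝ) : HasDerivAt (fun x : ℝ => (max 0 x) ^ 2) (2 * max 0 x) x := by
  rcases lt_trichotomy x 0 with h | h | h
  · rw [max_eq_left h.le]
    have : (fun x : ℝ => (max 0 x) ^ 2) =ᶠ[nhds x] fun _ => 0 := by
      filter_upwards [gt_mem_nhds h] with y hy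
      rw [max_eq_left hy.le]; simp
    simpa using (hasDerivAt_const x (0:ℝ)).congr_of_eventuallyEq this
  · subst h
    rw [hasDerivAt_iff_isLittleO_nhds_zero]
    simp only [max_self, mul_zero, smul_zero, sub_zero, zero_add, ne_eq, OfNat.ofNat_ne_zero,
      not_false_eq_true, zero_pow]
    have h1 : (fun h : ℝ => (max 0 h) ^ 2) =O[nhds 0] fun h : ℝ => h ^ 2 := by
      apply Asymptotics.IsBigO.of_bound 1
      filter_upwards with y
      rw [one_mul, Real.norm_eq_abs, Real.norm_eq_abs, abs_pow, abs_pow]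
      refine pow_le_pow_left₀ (abs_nonneg _) ?_ 2
      rw [abs_of_nonneg (le_max_left 0 y)]
      exact max_le (abs_nonneg y) (le_abs_self y)
    refine h1.trans_isLittleO ?_
    exact Asymptotics.isLittleO_pow_id (by norm_num)
  · rw [max_eq_right h.le]
    have : (fun x : ℝ => (max 0 x) ^ 2) =ᶠ[nhds x] fun x => x ^ 2 := by
      filter_upwards [lt_mem_nhds h] with y hy
      rw [max_eq_right hy.le]
    simpa using (hasDerivAt_pow 2 x).congr_of_eventuallyEq this

noncomputable def bc (r t : ℝ) : ℝ :=
  1 - (1 - Real.cos (2 * Real.pi * t)) / (1 - Real.cos (2 * Real.pi * r))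

/-- periodic bump -/
noncomputable def bump (r t : ℝ) : ℝ := (max 0 (bc r t)) ^ 2

noncomputable def bump' (r t : ℝ) : ℝ :=
  2 * max 0 (bc r t) * (-(2 * Real.pi * Real.sin (2 * Real.pi * t)) / (1 - Real.cos (2 * Real.pi * r)))

lemma bump_deriv (r t : ℝ) : HasDerivAt (bump r) (bump' r t) t := by
  have h1 : HasDerivAt (bc r)
      (-(2 * Real.pi * Real.sin (2 * Real.pi * t)) / (1 - Real.cos (2 * Real.pi * r))) t := by
    unfold bc
    have h2 : HasDerivAt (fun t : ℝ => 2 * Real.pi * t) (2 * Real.pi) t := by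
      simpa using (hasDerivAt_id t).const_mul (2 * Real.pi)
    have := ((h2.cos.const_sub 1).div_const (1 - Real.cos (2 * Real.pi * r))).const_sub 1
    refine this.congr_deriv ?_
    ring
  exact (hasDerivAt_pp (bc r t)).comp t h1

lemma bc_cont (r : ℝ) : Continuous (bc r) := by unfold bc; fun_prop

lemma bump'_cont (r : ℝ) : Continuous (bump' r) := by
  have := bc_cont r
  unfold bump'; fun_prop

lemma bump_zero (r : ℝ) : bump r 0 = 1 := by simp [bump, bc]

lemma den_ge {r : ℝ} (hr : 0 < r) (hr2 : r ≤ 1 / 2) : 8 * r ^ 2 ≤ 1 - Real.cos (2 * Real.pi * r) := by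
  have h1 := Real.mul_le_sin (x := Real.pi * r) (by positivity) (by nlinarith [Real.pi_pos])
  have h2 : 2 / Real.pi * (Real.pi * r) = 2 * r := by field_simp
  rw [h2] at h1
  have h3 : Real.cos (2 * Real.pi * r) = 1 - 2 * Real.sin (Real.pi * r) ^ 2 := by
    rw [mul_assoc, Real.cos_two_mul, Real.cos_sq']; ring
  rw [h3]
  nlinarith

lemma bc_supp {r t : ℝ} (hr : 0 < r) (hr2 : r ≤ 1 / 2) (h : 0 < bc r t) :
    |t - (round t : ℤ)| < r := by
  by_contra hc
  push Not at hc
  have h1 := abs_sub_round t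
  have hd := den_ge hr hr2
  have hd0 : 0 < 1 - Real.cos (2 * Real.pi * r) := by nlinarith
  have e : Real.cos (2 * Real.pi * t) = Real.cos (2 * Real.pi * |t - (round t : ℤ)|) := by
    rw [show 2 * Real.pi * |t - (round t : ℤ)| = |2 * Real.pi * t - (round t : ℤ) * (2 * Real.pi)| by
      rw [← abs_of_pos (show 0 < 2 * Real.pi by positivity), ← abs_mul,
        abs_of_pos (show 0 < 2 * Real.pi by positivity)]; congr 1; ring]
    rw [Real.cos_abs, Real.cos_sub_int_mul_two_pi]
  have : Real.cos (2 * Real.pi * |t - (round t : ℤ)|) ≤ Real.cos (2 * Real.pi * r) := by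
    apply Real.cos_le_cos_of_nonneg_of_le_pi (by positivity)
    · nlinarith [Real.pi_pos]
    · gcongr
  unfold bc at h
  rw [sub_pos, div_lt_one hd0, e] at h
  linarith

lemma bc_far {r t : ℝ} (hr : 0 < r) (hr2 : r ≤ 1 / 2) (h : ∀ M : ℤ, r ≤ |t - M|) : max 0 (bc r t) = 0 := by
  apply max_eq_left
  by_contra hc
  have := bc_supp hr hr2 (not_le.1 hc)
  linarith [h (round t)]

lemma bump_le {r t : ℝ} (hr : 0 < r) (hr2 : r ≤ 1 / 2) : |bump r t| ≤ 1 := by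
  have hd := den_ge hr hr2
  have hd0 : 0 < 1 - Real.cos (2 * Real.pi * r) := by nlinarith
  have h0 : 0 ≤ max 0 (bc r t) := le_max_left _ _
  have h1 : max 0 (bc r t) ≤ 1 := by
    apply max_le (by norm_num)
    unfold bc
    have : 0 ≤ (1 - Real.cos (2 * Real.pi * t)) / (1 - Real.cos (2 * Real.pi * r)) := by
      apply div_nonneg _ hd0.le
      linarith [Real.cos_le_one (2 * Real.pi * t)]
    linarith
  unfold bump
  rw [abs_of_nonneg (by positivity)]
  exact pow_le_one₀ h0 h1

lemma bump'_le {r t : ℝ} (hr : 0 < r) (hr2 : r ≤ 1 / 2) : |bump' r t| ≤ 10 / r := by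
  have hd := den_ge hr hr2
  have hd0 : 0 < 1 - Real.cos (2 * Real.pi * r) := by nlinarith
  have h0 : 0 ≤ max 0 (bc r t) := le_max_left _ _
  have h1 : max 0 (bc r t) ≤ 1 := by
    apply max_le (by norm_num)
    unfold bc
    have : 0 ≤ (1 - Real.cos (2 * Real.pi * t)) / (1 - Real.cos (2 * Real.pi * r)) := by
      apply div_nonneg _ hd0.le
      linarith [Real.cos_le_one (2 * Real.pi * t)]
    linarith
  rcases le_or_gt (bc r t) 0 with hb | hb
  · unfold bump'
    rw [max_eq_left hb]
    simp; positivity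
  · have hs := bc_supp hr hr2 hb
    have e : Real.sin (2 * Real.pi * t) = Real.sin (2 * Real.pi * (t - (round t : ℤ))) := by
      rw [show 2 * Real.pi * (t - (round t : ℤ)) = 2 * Real.pi * t - (round t : ℤ) * (2 * Real.pi) by
        ring, Real.sin_sub_int_mul_two_pi]
    have h2 : |Real.sin (2 * Real.pi * t)| ≤ 2 * Real.pi * r := by
      rw [e]
      refine (Real.abs_sin_le_abs (x := 2 * Real.pi * (t - (round t : ℤ)))).trans ?_
      rw [abs_mul, abs_of_pos (by positivity : 0 < 2 * Real.pi)]
      gcongr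
    unfold bump'
    rw [abs_mul, abs_mul, abs_div, abs_neg, abs_mul, abs_of_pos hd0,
      abs_of_pos (by positivity : 0 < 2 * Real.pi), abs_of_nonneg h0, abs_two]
    have h3 : 2 * Real.pi * |Real.sin (2 * Real.pi * t)| / (1 - Real.cos (2 * Real.pi * r)) ≤
        2 * Real.pi * (2 * Real.pi * r) / (8 * r ^ 2) := by gcongr
    have h4 : 2 * Real.pi * (2 * Real.pi * r) / (8 * r ^ 2) ≤ 5 / r := by
      rw [div_le_div_iff₀ (by positivity) hr]
      have : Real.pi ^ 2 ≤ 10 := by nlinarith [Real.pi_lt_d2, Real.pi_pos]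
      nlinarith [mul_pos hr hr]
    calc _ ≤ 2 * 1 * (5 / r) := by
            apply mul_le_mul _ (h3.trans h4) (by positivity) (by norm_num)
            linarith
      _ = _ := by ring

lemma bump_per (r t : ℝ) : bump r (t + 1) = bump r t := by
  unfold bump bc
  rw [mul_add, mul_one, Real.cos_add_two_pi]

lemma abs_sum_le_of_single {s : Finset ℕ} {x : ℕ → ℝ} {B : ℝ} (hB : 0 ≤ B) (h : ∀ k ∈ s, |x k| ≤ B)
    (h1 : ∀ k ∈ s, ∀ l ∈ s, x k ≠ 0 → x l ≠ 0 → k = l) : |∑ k ∈ s, x k| ≤ B := by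
  by_cases hz : ∃ k ∈ s, x k ≠ 0
  · obtain ⟨k, hk, hxk⟩ := hz
    rw [Finset.sum_eq_single_of_mem k hk]
    · exact h k hk
    · intro l hl hlk
      by_contra hxl
      exact hlk (h1 l hl k hk hxl hxk)
  · push Not at hz
    rw [Finset.sum_eq_zero hz]; simpa

lemma perturb (s : Finset ℕ) (a r c : ℕ → ℝ) {δ : ℝ} (hδ : 0 < δ) (h10 : 10 * δ < 1)
    (hr : ∀ k ∈ s, 0 < r k) (hr2 : ∀ k ∈ s, r k ≤ 1 / 2) (hc : ∀ k ∈ s, |c k| ≤ δ * r k)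
    (hdis : ∀ k ∈ s, ∀ l ∈ s, k ≠ l → ∀ M : ℤ, r k + r l ≤ |a k + M - a l|) :
    ∃ h : CircleDiffeo, (∀ z, |h.toFun z - z| ≤ δ) ∧ (∀ z, |deriv h.toFun z - 1| ≤ 10 * δ) ∧
      (∀ k ∈ s, h.toFun (a k) = a k + c k) ∧
      ∀ z, (∀ k ∈ s, ∀ M : ℤ, r k ≤ |a k + M - z|) → h.toFun z = z := by
  set H : ℝ → ℝ := fun z => z + ∑ k ∈ s, c k * bump (r k) (z - a k) with hH
  have hder : ∀ z, HasDerivAt H (1 + ∑ k ∈ s, c k * bump' (r k) (z - a k)) z := by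
    intro z
    apply (hasDerivAt_id z).add
    have : ∀ k ∈ s, HasDerivAt (fun z => c k * bump (r k) (z - a k)) (c k * bump' (r k) (z - a k)) z := by
      intro k _
      apply HasDerivAt.const_mul
      have := (bump_deriv (r k) (z - a k)).comp z ((hasDerivAt_id z).sub_const (a k))
      simp only [mul_one] at this
      exact this
    exact HasDerivAt.fun_sum this
  have hD : deriv H = fun z => 1 + ∑ k ∈ s, c k * bump' (r k) (z - a k) := by
    funext z; exact (hder z).deriv
  have hsingle : ∀ z, ∀ k ∈ s, ∀ l ∈ s, max 0 (bc (r k) (z - a k)) ≠ 0 →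
      max 0 (bc (r l) (z - a l)) ≠ 0 → k = l := by
    intro z k hk l hl h1 h2
    by_contra hkl
    have p1 : 0 < bc (r k) (z - a k) := by
      by_contra h; exact h1 (max_eq_left (not_lt.1 h))
    have p2 : 0 < bc (r l) (z - a l) := by
      by_contra h; exact h2 (max_eq_left (not_lt.1 h))
    have q1 := abs_lt.1 (bc_supp (hr k hk) (hr2 k hk) p1)
    have q2 := abs_lt.1 (bc_supp (hr l hl) (hr2 l hl) p2)
    have := hdis k hk l hl hkl (round (z - a k) - round (z - a l))
    have h3 : |a k + ((round (z - a k) - round (z - a l) : ℤ) : ℝ) - a l| < r k + r l := by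
      rw [abs_lt]; push_cast; constructor <;> linarith
    linarith
  have hs1 : ∀ z, |∑ k ∈ s, c k * bump (r k) (z - a k)| ≤ δ := by
    intro z
    apply abs_sum_le_of_single hδ.le
    · intro k hk
      rw [abs_mul]
      have h1 := hc k hk
      have h2 := bump_le (t := z - a k) (hr k hk) (hr2 k hk)
      have h3 := hr2 k hk
      have h4 := hr k hk
      calc _ ≤ δ * r k * 1 := mul_le_mul h1 h2 (abs_nonneg _) (by positivity)
        _ ≤ _ := by nlinarith
    · intro k hk l hl h1 h2
      apply hsingle z k hk l hl
      · intro h; apply h1; unfold bump; rw [h]; simp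
      · intro h; apply h2; unfold bump; rw [h]; simp
  have hs2 : ∀ z, |∑ k ∈ s, c k * bump' (r k) (z - a k)| ≤ 10 * δ := by
    intro z
    apply abs_sum_le_of_single (by positivity)
    · intro k hk
      rw [abs_mul]
      have h1 := hc k hk
      have h2 := bump'_le (t := z - a k) (hr k hk) (hr2 k hk)
      have h4 := hr k hk
      calc _ ≤ δ * r k * (10 / r k) := mul_le_mul h1 h2 (abs_nonneg _) (by positivity)
        _ = _ := by field_simp
    · intro k hk l hl h1 h2
      apply hsingle z k hk l hl
      · intro h; apply h1; unfold bump'; rw [h]; simp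
      · intro h; apply h2; unfold bump'; rw [h]; simp
  refine ⟨⟨H, ?_, ?_, ?_⟩, ?_, ?_, ?_, ?_⟩
  · rw [contDiff_one_iff_deriv]
    refine ⟨fun z => (hder z).differentiableAt, ?_⟩
    rw [hD]
    apply continuous_const.add
    apply continuous_finsetSum
    intro k _
    exact continuous_const.mul ((bump'_cont (r k)).comp (continuous_id.sub continuous_const))
  · intro z
    rw [hD]
    have := abs_le.1 (hs2 z)
    simp only
    linarith
  · intro z
    simp only [hH]
    have : ∀ k, bump (r k) (z + 1 - a k) = bump (r k) (z - a k) := by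
      intro k; rw [← bump_per (r k) (z - a k)]; congr 1; ring
    simp only [this]; ring
  · intro z
    simp only [hH, add_sub_cancel_left]
    exact hs1 z
  · intro z
    simp only [hD, add_sub_cancel_left]
    exact hs2 z
  · intro k hk
    simp only [hH, add_right_inj]
    rw [Finset.sum_eq_single_of_mem k hk, sub_self, bump_zero, mul_one]
    intro l hl hlk
    have := bc_far (t := a k - a l) (hr l hl) (hr2 l hl) (by
      intro M
      have := hdis k hk l hl (Ne.symm hlk) (-M)
      have h4 := hr k hk
      push_cast at this
      rw [show a k - a l - M = a k + -M - a l by ring]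
      linarith)
    unfold bump; rw [this]; simp
  · intro z hz
    simp only [hH, add_eq_left]
    apply Finset.sum_eq_zero
    intro k hk
    have := bc_far (t := z - a k) (hr k hk) (hr2 k hk) (by
      intro M
      have := hz k hk M
      rw [abs_sub_comm] at this
      rw [show z - a k - M = z - (a k + M) by ring]
      exact this)
    unfold bump; rw [this]; simp

namespace CircleDiffeo

lemma mvt1 (g : CircleDiffeo) {a b : ℝ} (hab : a < b) : ∃ z ∈ Ioo a b,
    g.toFun b - g.toFun a = Real.exp (g.phi z) * (b - a) := by
  have := g.it_mvt 1 hab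
  simpa [S] using this

/-- the orbit steered by multiplying the ratio by `τ` at each step -/
noncomputable def sY (g : CircleDiffeo) (A B : ℕ → ℝ) (t τ : ℝ) : ℕ → ℝ
  | 0 => t
  | k + 1 => A (k+1) + (g.toFun (sY g A B t τ k) - A (k+1)) * τ * (B (k+1) - A (k+1)) /
      ((g.toFun (sY g A B t τ k) - A (k+1)) * τ + (B (k+1) - g.toFun (sY g A B t τ k)))

lemma steer_alg {a b τ T : ℝ} (ha : 0 < a) (hb : 0 < b) (hT : 1 < T) (h1 : T⁻¹ ≤ τ) (h2 : τ ≤ T) :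
    |a * τ * (a + b) / (a * τ + b) - a| ≤ (T - 1) * min a b := by
  have hτ : 0 < τ := lt_of_lt_of_le (by positivity) h1
  have hd : 0 < a * τ + b := by positivity
  have hT1 : 1 ≤ T * τ := by
    rw [inv_le_iff_one_le_mul₀ (by linarith)] at h1; linarith
  have e : a * τ * (a + b) / (a * τ + b) - a = a * b * (τ - 1) / (a * τ + b) := by
    field_simp; ring
  rw [e, abs_div, abs_mul, abs_of_pos hd, abs_of_pos (mul_pos ha hb), div_le_iff₀ hd]
  have key : |τ - 1| ≤ (T - 1) * min 1 τ := by
    rcases le_total 1 τ with h | h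
    · rw [min_eq_left h, abs_of_nonneg (by linarith)]; linarith
    · rw [min_eq_right h, abs_of_nonpos (by linarith)]; nlinarith
  have hab : a * b ≤ min a b * max a b := by rw [min_mul_max]
  have hmax : max a b * min 1 τ ≤ a * τ + b := by
    rcases le_total a b with h | h
    · rw [max_eq_right h]
      have := min_le_left 1 τ
      nlinarith [mul_pos ha hτ]
    · rw [max_eq_left h]
      have := min_le_right 1 τ
      nlinarith [mul_pos ha hτ]
  have hmin : 0 < min a b := lt_min ha hb
  calc a * b * |τ - 1| ≤ (min a b * max a b) * ((T - 1) * min 1 τ) := by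
        apply mul_le_mul hab key (abs_nonneg _)
        exact mul_nonneg hmin.le (le_max_of_le_left ha.le)
    _ = (T - 1) * min a b * (max a b * min 1 τ) := by ring
    _ ≤ _ := by
        apply mul_le_mul_of_nonneg_left hmax
        exact mul_nonneg (by linarith) hmin.le

lemma steer (g : CircleDiffeo) {η C : ℝ} (hC0 : 0 ≤ C)
    (hmod : ∀ a b, |g.phi a - g.phi b| ≤ η + C * |a - b|) (A B : ℕ → ℝ) (m : ℕ)
    (hA : ∀ k < m, A (k+1) = g.toFun (A k)) (hB : ∀ k < m, B (k+1) = g.toFun (B k))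
    (hsum : ∑ k ∈ Finset.range m, (B k - A k) ≤ 2) {t r T : ℝ} (ht1 : A 0 < t) (ht2 : t < B 0)
    (hr1 : A m < r) (hr2 : r < B m) (hT : 1 < T)
    (hbig : |Real.log ((t - A 0) / (B 0 - t))| + |Real.log ((r - A m) / (B m - r))| + m * η + 2 * C
      ≤ m * Real.log T) :
    ∃ y : ℕ → ℝ, y 0 = t ∧ y m = r ∧ (∀ k ≤ m, A k < y k ∧ y k < B k) ∧
      ∀ k < m, |y (k+1) - g.toFun (y k)| ≤
        (T - 1) * min (g.toFun (y k) - A (k+1)) (B (k+1) - g.toFun (y k)) := by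
  have hin : ∀ τ : ℝ, 0 < τ → ∀ k ≤ m, A k < g.sY A B t τ k ∧ g.sY A B t τ k < B k := by
    intro τ hτ k
    induction k with
    | zero => intro _; exact ⟨ht1, ht2⟩
    | succ k ih =>
      intro hk
      obtain ⟨i1, i2⟩ := ih (by omega)
      have a1 := g.smono i1
      have a2 := g.smono i2
      rw [← hA k (by omega)] at a1
      rw [← hB k (by omega)] at a2
      simp only [sY]
      set w := g.toFun (g.sY A B t τ k)
      have ha : 0 < w - A (k+1) := by linarith
      have hb : 0 < B (k+1) - w := by linarith
      have hd : 0 < (w - A (k+1)) * τ + (B (k+1) - w) := by positivity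
      constructor
      · have : 0 < (w - A (k+1)) * τ * (B (k+1) - A (k+1)) / ((w - A (k+1)) * τ + (B (k+1) - w)) := by
          apply div_pos _ hd
          apply mul_pos (by positivity); linarith
        linarith
      · rw [← lt_sub_iff_add_lt', div_lt_iff₀ hd]
        nlinarith
  have hcont : ∀ k ≤ m, ContinuousOn (fun τ => g.sY A B t τ k) (Ioi 0) := by
    intro k
    induction k with
    | zero => intro _; exact continuousOn_const
    | succ k ih =>
      intro hk
      have ih := ih (by omega)
      have hg : ContinuousOn (fun τ => g.toFun (g.sY A B t τ k)) (Ioi 0) :=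
        g.cont.comp_continuousOn ih
      simp only [sY]
      apply continuousOn_const.add
      apply ContinuousOn.div
      · exact ((hg.sub continuousOn_const).mul continuousOn_id).mul continuousOn_const
      · exact ((hg.sub continuousOn_const).mul continuousOn_id).add (continuousOn_const.sub hg)
      · intro τ hτ
        obtain ⟨i1, i2⟩ := hin τ hτ k (by omega)
        have a1 := g.smono i1
        have a2 := g.smono i2
        rw [← hA k (by omega)] at a1
        rw [← hB k (by omega)] at a2
        have : 0 < (g.toFun (g.sY A B t τ k) - A (k+1)) * τ := mul_pos (by linarith) hτ
        linarith
  have hX : ∀ τ : ℝ, 0 < τ → ∀ k ≤ m,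
      |Real.log ((g.sY A B t τ k - A k) / (B k - g.sY A B t τ k)) - Real.log ((t - A 0) / (B 0 - t))
        - k * Real.log τ| ≤ k * η + C * ∑ j ∈ Finset.range k, (B j - A j) := by
    intro τ hτ k
    induction k with
    | zero => intro _; simp [sY]
    | succ k ih =>
      intro hk
      have ih := ih (by omega)
      obtain ⟨i1, i2⟩ := hin τ hτ k (by omega)
      obtain ⟨z1, hz1, e1⟩ := g.mvt1 i1
      obtain ⟨z2, hz2, e2⟩ := g.mvt1 i2
      rw [← hA k (by omega)] at e1
      rw [← hB k (by omega)] at e2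
      have p1 : 0 < g.sY A B t τ k - A k := by linarith
      have p2 : 0 < B k - g.sY A B t τ k := by linarith
      have hm := hmod z1 z2
      have hzz : |z1 - z2| ≤ B k - A k := by
        rw [abs_le]; constructor <;> linarith [hz1.1, hz1.2, hz2.1, hz2.2]
      have hCz : C * |z1 - z2| ≤ C * (B k - A k) := by gcongr
      have key : Real.log ((g.sY A B t τ (k+1) - A (k+1)) / (B (k+1) - g.sY A B t τ (k+1))) =
          Real.log ((g.sY A B t τ k - A k) / (B k - g.sY A B t τ k)) + Real.log τ +
            (g.phi z1 - g.phi z2) := by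
        have e3 : (g.sY A B t τ (k+1) - A (k+1)) / (B (k+1) - g.sY A B t τ (k+1)) =
            (g.sY A B t τ k - A k) / (B k - g.sY A B t τ k) * τ * Real.exp (g.phi z1 - g.phi z2) := by
          simp only [sY]
          set w := g.toFun (g.sY A B t τ k)
          have ha : 0 < w - A (k+1) := by rw [e1]; positivity
          have hb : 0 < B (k+1) - w := by rw [e2]; positivity
          have hd : 0 < (w - A (k+1)) * τ + (B (k+1) - w) := by positivity
          have f1 : A (k+1) + (w - A (k+1)) * τ * (B (k+1) - A (k+1)) /
            ((w - A (k+1)) * τ + (B (k+1) - w)) - A (k+1) = (w - A (k+1)) * τ * (B (k+1) - A (k+1)) /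
            ((w - A (k+1)) * τ + (B (k+1) - w)) := by ring
          have f2 : B (k+1) - (A (k+1) + (w - A (k+1)) * τ * (B (k+1) - A (k+1)) /
            ((w - A (k+1)) * τ + (B (k+1) - w))) = (B (k+1) - w) * (B (k+1) - A (k+1)) /
            ((w - A (k+1)) * τ + (B (k+1) - w)) := by
            rw [eq_div_iff hd.ne', sub_mul, add_mul, div_mul_cancel₀ _ hd.ne']; ring
          have hBA : B (k+1) - A (k+1) ≠ 0 := by linarith
          rw [f1, f2, div_div_div_cancel_right₀ hd.ne', mul_div_mul_right _ _ hBA, e1, e2, Real.exp_sub]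
          have := Real.exp_pos (g.phi z2)
          field_simp
        rw [e3, Real.log_mul (by positivity) (by positivity), Real.log_mul (by positivity) hτ.ne',
          Real.log_exp]
      rw [key, Finset.sum_range_succ]
      push_cast
      rw [abs_le] at ih hm ⊢
      constructor <;> nlinarith
  have hT0 : 0 < T := by linarith
  have hTi : 0 < T⁻¹ := by positivity
  have hTT : T⁻¹ ≤ T := by
    have : T⁻¹ ≤ 1 := inv_le_one_of_one_le₀ hT.le
    linarith
  have hCs : C * ∑ j ∈ Finset.range m, (B j - A j) ≤ C * 2 := by gcongr
  have hmono : ∀ x y, A m < x → x < y → y < B m →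
      Real.log ((x - A m) / (B m - x)) < Real.log ((y - A m) / (B m - y)) := by
    intro x y h1 h2 h3
    apply Real.log_lt_log
    · apply div_pos <;> linarith
    · rw [div_lt_div_iff₀ (by linarith) (by linarith)]
      nlinarith
  have ab1 := abs_le.1 (le_refl |Real.log ((t - A 0) / (B 0 - t))|)
  have ab2 := abs_le.1 (le_refl |Real.log ((r - A m) / (B m - r))|)
  have hup : r ≤ g.sY A B t T m := by
    by_contra hc
    have := hmono _ r (hin T hT0 m le_rfl).1 (not_le.1 hc) hr2
    have := abs_le.1 (hX T hT0 m le_rfl)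
    linarith
  have hlo : g.sY A B t T⁻¹ m ≤ r := by
    by_contra hc
    have := hmono r _ hr1 (not_le.1 hc) (hin T⁻¹ hTi m le_rfl).2
    have := abs_le.1 (hX T⁻¹ hTi m le_rfl)
    rw [Real.log_inv] at this
    linarith
  obtain ⟨τ, ⟨hτ1, hτ2⟩, hτ⟩ := intermediate_value_Icc hTT
    ((hcont m le_rfl).mono (fun x hx => lt_of_lt_of_le hTi hx.1)) ⟨hlo, hup⟩
  have hτ0 : 0 < τ := lt_of_lt_of_le hTi hτ1
  refine ⟨g.sY A B t τ, rfl, hτ, hin τ hτ0, ?_⟩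
  intro k hk
  obtain ⟨i1, i2⟩ := hin τ hτ0 k (by omega)
  have a1 := g.smono i1
  have a2 := g.smono i2
  rw [← hA k (by omega)] at a1
  rw [← hB k (by omega)] at a2
  have := steer_alg (a := g.toFun (g.sY A B t τ k) - A (k+1)) (b := B (k+1) - g.toFun (g.sY A B t τ k))
    (by linarith) (by linarith) hT hτ1 hτ2
  refine le_of_eq_of_le ?_ this
  congr 1
  simp only [sY]
  ring_nf

end CircleDiffeo

namespace CircleDiffeo

/-- composition -/
noncomputable def compo (h g : CircleDiffeo) : CircleDiffeo where
  toFun := h.toFun ∘ g.toFun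
  contDiff := h.contDiff.comp g.contDiff
  deriv_pos := by
    intro x
    rw [deriv_comp x (h.diff _) (g.diff x)]
    exact mul_pos (h.deriv_pos _) (g.deriv_pos x)
  commute_translation := by
    intro x
    simp [g.commute_translation, h.commute_translation]

lemma assemble (g : CircleDiffeo) (L U y : ℕ → ℝ) (n : ℕ) {δ : ℝ} (hδ : 0 < δ) (h10 : 10 * δ < 1)
    (hLU : ∀ k ≤ n, U k < L k + 1)
    (hsep : ∀ k ≤ n, ∀ l ≤ n, k ≠ l → ∀ M : ℤ, U k + M ≤ L l ∨ U l ≤ L k + M)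
    (h1 : ∀ k < n, L (k+1) ≤ g.toFun (y k)) (h2 : ∀ k < n, g.toFun (y k) ≤ U (k+1))
    (h3 : ∀ k < n, |y (k+1) - g.toFun (y k)| ≤
      δ * min (g.toFun (y k) - L (k+1)) (U (k+1) - g.toFun (y k))) :
    ∃ gi : CircleDiffeo, (∀ z, |gi.toFun z - g.toFun z| ≤ δ) ∧
      (∀ z, |deriv gi.toFun z - deriv g.toFun z| ≤ 10 * δ * deriv g.toFun z) ∧
      ∀ k ≤ n, gi.toFun^[k] (y 0) = y k := by
  set a : ℕ → ℝ := fun k => g.toFun (y (k-1)) with ha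
  set r : ℕ → ℝ := fun k => min (a k - L k) (U k - a k) with hr
  set c : ℕ → ℝ := fun k => y k - a k with hc
  set s : Finset ℕ := (Finset.Icc 1 n).filter (fun k => 0 < r k) with hs
  have hpred : ∀ k, 1 ≤ k → k - 1 + 1 = k := by intro k hk; omega
  have b1 : ∀ k, 1 ≤ k → k ≤ n → L k ≤ a k := by
    intro k hk hkn
    have := h1 (k-1) (by omega)
    rwa [hpred k hk] at this
  have b2 : ∀ k, 1 ≤ k → k ≤ n → a k ≤ U k := by
    intro k hk hkn
    have := h2 (k-1) (by omega)
    rwa [hpred k hk] at this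
  have b3 : ∀ k, 1 ≤ k → k ≤ n → |c k| ≤ δ * r k := by
    intro k hk hkn
    have := h3 (k-1) (by omega)
    rwa [hpred k hk] at this
  have rl : ∀ k, r k ≤ a k - L k := fun k => min_le_left _ _
  have ru : ∀ k, r k ≤ U k - a k := fun k => min_le_right _ _
  have r0 : ∀ k, 1 ≤ k → k ≤ n → 0 ≤ r k := fun k hk hkn =>
    le_min (by linarith [b1 k hk hkn]) (by linarith [b2 k hk hkn])
  have ms : ∀ k, k ∈ s ↔ (1 ≤ k ∧ k ≤ n) ∧ 0 < r k := by
    intro k; simp [hs]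
  have sep' : ∀ k l, 1 ≤ k → k ≤ n → 1 ≤ l → l ≤ n → k ≠ l → ∀ M : ℤ,
      r k + r l ≤ |a k + M - a l| := by
    intro k l hk hkn hl hln hkl M
    have := rl k
    have := rl l
    have := ru k
    have := ru l
    rcases hsep k hkn l hln hkl M with h | h
    · rw [abs_sub_comm]
      refine le_trans ?_ (le_abs_self _)
      linarith
    · refine le_trans ?_ (le_abs_self _)
      linarith
  obtain ⟨h, hh1, hh2, hh3, hh4⟩ := perturb s a r c hδ h10 (fun k hk => ((ms k).1 hk).2)
    (fun k hk => by
      have := rl k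
      have := ru k
      have := hLU k ((ms k).1 hk).1.2
      linarith)
    (fun k hk => b3 k ((ms k).1 hk).1.1 ((ms k).1 hk).1.2)
    (fun k hk l hl hkl M => sep' k l ((ms k).1 hk).1.1 ((ms k).1 hk).1.2 ((ms l).1 hl).1.1
      ((ms l).1 hl).1.2 hkl M)
  have hy : ∀ k < n, h.toFun (g.toFun (y k)) = y (k+1) := by
    intro k hk
    change h.toFun (a (k+1)) = y (k+1)
    by_cases hks : k + 1 ∈ s
    · rw [hh3 _ hks]; simp [hc]
    · have hr0 : r (k+1) = 0 := by
        rw [ms] at hks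
        have := r0 (k+1) (by omega) (by omega)
        by_contra hne
        exact hks ⟨⟨by omega, by omega⟩, lt_of_le_of_ne this (Ne.symm hne)⟩
      have hc0 : c (k+1) = 0 := by
        have := b3 (k+1) (by omega) (by omega)
        rw [hr0, mul_zero] at this
        exact abs_nonpos_iff.1 this
      rw [hh4]
      · simp only [hc] at hc0; linarith
      · intro l hl M
        have hl' := (ms l).1 hl
        have := sep' l (k+1) hl'.1.1 hl'.1.2 (by omega) (by omega) (by rintro rfl; exact hks hl) M
        rw [hr0, add_zero] at this
        exact this
  refine ⟨h.compo g, fun z => hh1 _, ?_, ?_⟩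
  · intro z
    have e : deriv (h.compo g).toFun z = deriv h.toFun (g.toFun z) * deriv g.toFun z :=
      deriv_comp z (h.diff _) (g.diff z)
    rw [e, show deriv h.toFun (g.toFun z) * deriv g.toFun z - deriv g.toFun z =
      (deriv h.toFun (g.toFun z) - 1) * deriv g.toFun z by ring, abs_mul, abs_of_pos (g.deriv_pos z)]
    exact mul_le_mul_of_nonneg_right (hh2 _) (g.deriv_pos z).le
  · intro k
    induction k with
    | zero => intro _; rfl
    | succ k ih =>
      intro hk
      rw [Function.iterate_succ_apply', ih (by omega)]
      exact hy k (by omega)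

end CircleDiffeo

/-! Combinatorics of the rotation orbit -/

lemma sep_alpha_lt {α : ℝ} {u v : ℕ} {p p' : ℤ} (F : Farey α u v p p') {n m : ℕ}
    (hu : u + 2 * m < n) (hv : v + 2 * m < n) (hn : n + 1 < u + v) (am ap : ℕ → ℝ)
    (ham : ∀ k, am k = if k ≤ m then p' - v * α else if n ≤ k + m then u * α - p else 0)
    (hap : ∀ k, ap k = if k ≤ m then u * α - p else if n ≤ k + m then p' - v * α else 0)
    {k l : ℕ} (hkl : k < l) (hl : l ≤ n) (M : ℤ) :
    k * α + ap k + M ≤ l * α - am l ∨ l * α + ap l ≤ k * α - am k + M := by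
  by_contra hc
  push Not at hc
  obtain ⟨c1, c2⟩ := hc
  have hd := F.hd
  have hd' := F.hd'
  have emp : ∀ (d N : ℤ), 0 < d → d < u + v → -(p' - v * α) < d * α + N → d * α + N < u * α - p → False :=
    fun d N h1 h2 h3 h4 => F.empty h1 h2 h3 h4
  rcases le_or_gt k m with hkm | hkm
  · rcases le_or_gt l m with hlm | hlm
    · rw [ham, hap, if_pos, if_pos] at c1 c2 <;> try assumption
      rcases lt_or_ge ((l:ℝ) * α - k * α - M) (u * α - p) with x1 | x1
      · rcases lt_or_ge (-(p' - v * α)) ((l:ℝ) * α - k * α - M) with x2 | x2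
        · exact emp (l - k) (-M) (by omega) (by omega) (by push_cast; linarith) (by push_cast; linarith)
        · exact emp (l - k + u) (-M - p) (by omega) (by omega) (by push_cast; linarith) (by push_cast; linarith)
      · exact emp (l - k + v) (-M - p') (by omega) (by omega) (by push_cast; linarith) (by push_cast; linarith)
    · rcases le_or_gt n (l + m) with hln | hln
      · rw [ham, hap, if_pos hkm, if_neg (by omega), if_pos hln] at c1 c2
        rcases lt_or_ge ((l:ℝ) * α - k * α - M) (u * α - p) with x1 | x1
        · rcases lt_or_ge (-(p' - v * α)) ((l:ℝ) * α - k * α - M) with x2 | x2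
          · exact emp (l - k) (-M) (by omega) (by omega) (by push_cast; linarith) (by push_cast; linarith)
          · exact emp (l - k - v) (-M + p') (by omega) (by omega) (by push_cast; linarith) (by push_cast; linarith)
        · exact emp (l - k - u) (-M + p) (by omega) (by omega) (by push_cast; linarith) (by push_cast; linarith)
      · rw [ham, hap, if_pos hkm, if_neg (by omega), if_neg (by omega)] at c1 c2
        exact emp (l - k) (-M) (by omega) (by omega) (by push_cast; linarith) (by push_cast; linarith)
  · rcases le_or_gt n (k + m) with hkn | hkn
    · rw [ham, hap, if_neg (by omega), if_pos (by omega), if_neg (by omega), if_pos (by omega)] at c1 c2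
      rcases lt_or_ge ((l:ℝ) * α - k * α - M) (u * α - p) with x1 | x1
      · rcases lt_or_ge (-(p' - v * α)) ((l:ℝ) * α - k * α - M) with x2 | x2
        · exact emp (l - k) (-M) (by omega) (by omega) (by push_cast; linarith) (by push_cast; linarith)
        · exact emp (l - k + u) (-M - p) (by omega) (by omega) (by push_cast; linarith) (by push_cast; linarith)
      · exact emp (l - k + v) (-M - p') (by omega) (by omega) (by push_cast; linarith) (by push_cast; linarith)
    · rcases le_or_gt n (l + m) with hln | hln
      · rw [ham l, if_neg (by omega), if_pos hln, hap k, if_neg (by omega), if_neg (by omega)] at c1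
        rw [ham k, if_neg (by omega), if_neg (by omega), hap l, if_neg (by omega), if_pos hln] at c2
        exact emp (l - k) (-M) (by omega) (by omega) (by push_cast; linarith) (by push_cast; linarith)
      · rw [ham, hap, if_neg (by omega), if_neg (by omega), if_neg (by omega), if_neg (by omega)] at c1 c2
        linarith

lemma sep_alpha {α : ℝ} {u v : ℕ} {p p' : ℤ} (F : Farey α u v p p') {n m : ℕ}
    (hu : u + 2 * m < n) (hv : v + 2 * m < n) (hn : n + 1 < u + v) (am ap : ℕ → ℝ)
    (ham : ∀ k, am k = if k ≤ m then p' - v * α else if n ≤ k + m then u * α - p else 0)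
    (hap : ∀ k, ap k = if k ≤ m then u * α - p else if n ≤ k + m then p' - v * α else 0)
    {k l : ℕ} (hkl : k ≠ l) (hk : k ≤ n) (hl : l ≤ n) (M : ℤ) :
    k * α + ap k + M ≤ l * α - am l ∨ l * α + ap l ≤ k * α - am k + M := by
  rcases lt_or_gt_of_ne hkl with h | h
  · exact sep_alpha_lt F hu hv hn am ap ham hap h hl M
  · have := sep_alpha_lt F hu hv hn am ap ham hap h hk (-M)
    push_cast at this
    rcases this with h | h
    · right; linarith
    · left; linarith

lemma split_ratio {A B R t : ℝ} (hAB : A < B) (hR : 0 < R) (ht : t = A + R / (1 + R) * (B - A)) :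
    A < t ∧ t < B ∧ (t - A) / (B - t) = R := by
  have h1 : 0 < 1 + R := by linarith
  have h2 : 0 < B - A := by linarith
  have e1 : t - A = R * (B - A) / (1 + R) := by rw [ht]; ring
  have e2 : B - t = (B - A) / (1 + R) := by rw [ht]; field_simp; ring
  have p1 : 0 < t - A := by rw [e1]; positivity
  have p2 : 0 < B - t := by rw [e2]; positivity
  refine ⟨by linarith, by linarith, ?_⟩
  rw [e1, e2]; field_simp

namespace CircleDiffeo

lemma order_le (g : CircleDiffeo) {α : ℝ} (hα : Irrational α) (h : hasRotationNumber g α)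
    (x : ℝ) (k l : ℕ) (M N : ℤ) (hle : k * α + M ≤ l * α + N) :
    g.toFun^[k] x + M ≤ g.toFun^[l] x + N := by
  rcases hle.lt_or_eq with h1 | h1
  · exact (g.order h x k l M N h1).le
  · obtain ⟨rfl, rfl⟩ := irr_eq hα h1
    exact le_rfl

lemma exists_base (g : CircleDiffeo) {α : ℝ} (h : hasRotationNumber g α)
    {u v : ℕ} {p p' : ℤ} (F : Farey α u v p p') (hu2 : 2 ≤ u) (y : ℝ) {R : ℝ} (hR : 0 < R) :
    ∃ s, y = (g.toFun^[v] s - p') +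
      R / (1 + R) * ((g.toFun^[u] s - p) - (g.toFun^[v] s - p')) := by
  have hlt := F.lt_one hu2
  have c : Continuous (fun s => (g.toFun^[v] s - p') +
      R / (1 + R) * ((g.toFun^[u] s - p) - (g.toFun^[v] s - p'))) := by
    have := g.it_cont u
    have := g.it_cont v
    fun_prop
  have b : ∀ s, s - 1 ≤ (g.toFun^[v] s - p') +
      R / (1 + R) * ((g.toFun^[u] s - p) - (g.toFun^[v] s - p')) ∧ (g.toFun^[v] s - p') +
      R / (1 + R) * ((g.toFun^[u] s - p) - (g.toFun^[v] s - p')) ≤ s + 1 := by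
    intro s
    have l1 := g.lt_u h F s
    have l2 := g.lt_v h F s
    have l3 := g.order h s u v (-p) (1 - p') (by push_cast; linarith)
    push_cast at l3
    obtain ⟨q1, q2, -⟩ := split_ratio (R := R) (lt_trans l2 l1) hR rfl
    constructor <;> linarith
  obtain ⟨s, -, hs⟩ := intermediate_value_Icc (show y - 1 ≤ y + 1 by linarith) c.continuousOn
    (show y ∈ Icc _ _ from ⟨by linarith [(b (y-1)).2], by linarith [(b (y+1)).1]⟩)
  exact ⟨s, hs.symm⟩

set_option maxHeartbeats 2000000 in
lemma construct (g : CircleDiffeo) {α : ℝ} (hα : Irrational α) (h : hasRotationNumber g α)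
    {u v : ℕ} {p p' : ℤ} (F : Farey α u v p p') {n m : ℕ} (hu2 : 2 ≤ u)
    (hu : u + 2 * m < n) (hv : v + 2 * m < n) (hn : n + 1 < u + v) (y : ℝ) {R Q : ℝ} (hR : 0 < R)
    (hQ : 0 < Q) {η C δ : ℝ} (hC0 : 0 ≤ C) (hmod : ∀ a b, |g.phi a - g.phi b| ≤ η + C * |a - b|)
    (hδ : 0 < δ) (h10 : 10 * δ < 1)
    (hb1 : ∀ w, |Real.log R| + |Real.log (g.rat1 u v p p' w)| + m * η + 2 * C ≤ m * Real.log (1 + δ))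
    (hb2 : ∀ c e1 e2 : ℝ, g.toFun^[u] e1 = c → g.toFun^[v] e2 = c →
        |Real.log ((c - (e1 + p)) / (e2 + p' - c))| + |Real.log Q| + m * η + 2 * C
          ≤ m * Real.log (1 + δ)) :
    ∃ gi : CircleDiffeo, (∀ z, |gi.toFun z - g.toFun z| ≤ δ) ∧
      (∀ z, |deriv gi.toFun z - deriv g.toFun z| ≤ 10 * δ * deriv g.toFun z) ∧
      OP α (fun k => gi.toFun^[k] y) n ∧
      (y - (gi.toFun^[v] y - p')) / (gi.toFun^[u] y - p - y) = R ∧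
      (gi.toFun^[n] y - (gi.toFun^[n-u] y + p)) / (gi.toFun^[n-v] y + p' - gi.toFun^[n] y) = Q := by
  have hlt1 := F.lt_one hu2
  have hd := F.hd
  have hd' := F.hd'
  obtain ⟨s, hs⟩ := g.exists_base h F hu2 y hR
  set σ : ℕ → ℝ := fun k => g.toFun^[k] s with hσ
  have σs : ∀ k, σ (k+1) = g.toFun (σ k) := fun k => Function.iterate_succ_apply' _ _ _
  have σa : ∀ k j, g.toFun^[j] (σ k) = σ (k + j) := by
    intro k j; simp only [hσ]; rw [← Function.iterate_add_apply, add_comm]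
  have σo : ∀ (a b : ℕ) (M N : ℤ), a * α + M < b * α + N → σ a + M < σ b + N := g.order h s
  have σle : ∀ (a b : ℕ) (M N : ℤ), a * α + M ≤ b * α + N → σ a + M ≤ σ b + N := g.order_le hα h s
  have gadd : ∀ (x : ℝ) (M : ℤ), g.toFun (x + M) = g.toFun x + M := g.add_int
  have gsub : ∀ (x : ℝ) (M : ℤ), g.toFun (x - M) = g.toFun x - M := by
    intro x M
    have := gadd x (-M)
    push_cast at this
    rw [sub_eq_add_neg, this]; ring
  -- first steering
  have hAB0 : σ v - p' < σ u - p := by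
    have := σo v u (-p') (-p) (by push_cast; linarith)
    push_cast at this; linarith
  obtain ⟨t1, t2, t3⟩ := split_ratio hAB0 hR hs
  have r1 : σ (m + v) - p' < σ m := by have := g.lt_v h F (σ m); rwa [σa] at this
  have r2 : σ m < σ (m + u) - p := by have := g.lt_u h F (σ m); rwa [σa] at this
  obtain ⟨y1, y10, y1m, y1in, y1st⟩ := g.steer hC0 hmod (fun k => σ (k + v) - p') (fun k => σ (k + u) - p) m
    (by intro k _; rw [gsub, ← σs]; congr 2; ring)
    (by intro k _; rw [gsub, ← σs]; congr 2; ring)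
    (by
      have a1 := g.sum1 hα h F s (K := m) (by omega)
      have a2 := g.sum2 hα h F s (K := m) (by omega)
      have := add_le_add a1 a2
      rw [← Finset.sum_add_distrib] at this
      refine le_trans (le_of_eq ?_) (this.trans (by norm_num))
      apply Finset.sum_congr rfl
      intro k _
      simp only [hσ]
      ring)
    (t := y) (r := σ m) (T := 1 + δ) (by simpa using t1) (by simpa using t2) r1 r2 (by linarith)
    (by
      have := hb1 (σ m)
      unfold rat1 at this
      rw [σa, σa] at this
      simp only [zero_add]
      rw [t3]
      exact this)
  -- second steering
  have hABn : σ (n - u) + p < σ (n - v) + p' := by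
    apply σo
    rw [Nat.cast_sub (by omega), Nat.cast_sub (by omega)]; linarith
  obtain ⟨q1, q2, q3⟩ := split_ratio hABn hQ rfl
  set yn := σ (n - u) + p + Q / (1 + Q) * (σ (n - v) + p' - (σ (n - u) + p)) with hyn
  have eu : n - m - u + u = n - m := by omega
  have ev : n - m - v + v = n - m := by omega
  have eum : n - m - u + m = n - u := by omega
  have evm : n - m - v + m = n - v := by omega
  have w1 : σ (n - m - u) + p < σ (n - m) := by
    have := g.lt_u h F (σ (n - m - u)); rw [σa, eu] at this; linarith
  have w2 : σ (n - m) < σ (n - m - v) + p' := by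
    have := g.lt_v h F (σ (n - m - v)); rw [σa, ev] at this; linarith
  obtain ⟨y2, y20, y2m, y2in, y2st⟩ := g.steer hC0 hmod (fun k => σ (n - m - u + k) + p)
    (fun k => σ (n - m - v + k) + p') m
    (by intro k _; rw [gadd, ← σs]; congr 2)
    (by intro k _; rw [gadd, ← σs]; congr 2)
    (by
      have a1 := g.sum1 hα h F (σ (n - m - u)) (K := m) (by omega)
      have a2 := g.sum2 hα h F (σ (n - m - v)) (K := m) (by omega)
      have := add_le_add a1 a2
      rw [← Finset.sum_add_distrib] at this
      refine le_trans (le_of_eq ?_) (this.trans (by norm_num))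
      apply Finset.sum_congr rfl
      intro k _
      rw [σa, σa, σa, σa, show n - m - u + (k + u) = n - m - v + (k + v) by omega]
      ring)
    (t := σ (n - m)) (r := yn) (T := 1 + δ) (by simpa using w1) (by simpa using w2)
    (by rw [eum]; exact q1) (by rw [evm]; exact q2) (by linarith)
    (by
      have := hb2 (σ (n - m)) (σ (n - m - u)) (σ (n - m - v)) (by rw [σa, eu]) (by rw [σa, ev])
      simp only [add_zero]
      rw [eum, evm, q3]
      exact this)
  -- intervals
  set L : ℕ → ℝ := fun k => if k ≤ m then σ (k + v) - p' else if n ≤ k + m then σ (k - u) + p else σ k with hL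
  set U : ℕ → ℝ := fun k => if k ≤ m then σ (k + u) - p else if n ≤ k + m then σ (k - v) + p' else σ k with hU
  set Y : ℕ → ℝ := fun k => if k ≤ m then y1 k else if n ≤ k + m then y2 (k + m - n) else σ k with hY
  set am : ℕ → ℝ := fun k => if k ≤ m then p' - v * α else if n ≤ k + m then u * α - p else 0 with ham
  set ap : ℕ → ℝ := fun k => if k ≤ m then u * α - p else if n ≤ k + m then p' - v * α else 0 with hap
  have sa := fun (k l : ℕ) (hkl : k ≠ l) (hk : k ≤ n) (hl : l ≤ n) (M : ℤ) =>
    sep_alpha F hu hv hn am ap (fun _ => rfl) (fun _ => rfl) hkl hk hl M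
  have am0 : ∀ k, 0 ≤ am k := by
    intro k; simp only [ham]; split_ifs <;> linarith
  have ap0 : ∀ k, 0 ≤ ap k := by
    intro k; simp only [hap]; split_ifs <;> linarith
  have amp : ∀ k, am k + ap k < 1 := by
    intro k; simp only [ham, hap]; split_ifs <;> linarith
  have Lrep : ∀ k, ∃ (a : ℕ) (M : ℤ), L k = σ a + M ∧ k * α - am k = a * α + M := by
    intro k
    simp only [hL, ham]
    split_ifs with i1 i2
    · exact ⟨k + v, -p', by push_cast; ring, by push_cast; ring⟩
    · exact ⟨k - u, p, rfl, by rw [Nat.cast_sub (by omega)]; ring⟩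
    · exact ⟨k, 0, by simp, by simp⟩
  have Urep : ∀ k, ∃ (a : ℕ) (M : ℤ), U k = σ a + M ∧ k * α + ap k = a * α + M := by
    intro k
    simp only [hU, hap]
    split_ifs with i1 i2
    · exact ⟨k + u, -p, by push_cast; ring, by push_cast; ring⟩
    · exact ⟨k - v, p', rfl, by rw [Nat.cast_sub (by omega)]; ring⟩
    · exact ⟨k, 0, by simp, by simp⟩
  have UL : ∀ (k l : ℕ) (M : ℤ), k * α + ap k + M ≤ l * α - am l → U k + M ≤ L l := by
    intro k l M hle
    obtain ⟨a, N, e1, e2⟩ := Urep k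
    obtain ⟨b, N', e3, e4⟩ := Lrep l
    have := σle a b (N + M) N' (by push_cast; linarith)
    push_cast at this
    linarith
  have hLU : ∀ k ≤ n, U k < L k + 1 := by
    intro k _
    obtain ⟨a, N, e1, e2⟩ := Urep k
    obtain ⟨b, N', e3, e4⟩ := Lrep k
    have := σo a b N (N' + 1) (by push_cast; linarith [amp k])
    push_cast at this
    linarith
  have hYs : ∀ k ≤ n, (k ≤ m ∨ n ≤ k + m) → L k < Y k ∧ Y k < U k := by
    intro k hk hkm
    rcases le_or_gt k m with i | i
    · simp only [hL, hY, hU, if_pos i]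
      exact y1in k i
    · have i2 : n ≤ k + m := by omega
      simp only [hL, hY, hU, if_neg (not_le.2 i), if_pos i2]
      have := y2in (k + m - n) (by omega)
      rwa [show n - m - u + (k + m - n) = k - u by omega,
        show n - m - v + (k + m - n) = k - v by omega] at this
  have hYm : ∀ k, m < k → k + m < n → L k = σ k ∧ Y k = σ k ∧ U k = σ k := by
    intro k i1 i2
    simp only [hL, hY, hU, if_neg (not_le.2 i1), if_neg (not_le.2 i2), and_self]
  have hYle : ∀ k ≤ n, L k ≤ Y k ∧ Y k ≤ U k := by
    intro k hk
    by_cases hkm : k ≤ m ∨ n ≤ k + m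
    · have := hYs k hk hkm
      exact ⟨this.1.le, this.2.le⟩
    · push Not at hkm
      obtain ⟨e1, e2, e3⟩ := hYm k hkm.1 hkm.2
      rw [e1, e2, e3]; simp
  have Ym : Y m = σ m := by simp only [hY, if_pos le_rfl]; exact y1m
  have Yn' : Y (n - m) = σ (n - m) := by
    simp only [hY]
    rw [if_neg (by omega), if_pos (by omega), show n - m + m - n = 0 by omega]; exact y20
  have Y0 : Y 0 = y := by simp only [hY, if_pos (Nat.zero_le m)]; exact y10
  have Yn : Y n = yn := by
    simp only [hY]
    rw [if_neg (by omega), if_pos (by omega), show n + m - n = m by omega]; exact y2m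
  -- steps
  have step : ∀ k < n, L (k+1) ≤ g.toFun (Y k) ∧ g.toFun (Y k) ≤ U (k+1) ∧ |Y (k+1) - g.toFun (Y k)| ≤
      δ * min (g.toFun (Y k) - L (k+1)) (U (k+1) - g.toFun (Y k)) := by
    intro k hk
    have easy : Y k = σ k → Y (k+1) = σ (k+1) → L (k+1) ≤ g.toFun (Y k) ∧ g.toFun (Y k) ≤ U (k+1) ∧
      |Y (k+1) - g.toFun (Y k)| ≤ δ * min (g.toFun (Y k) - L (k+1)) (U (k+1) - g.toFun (Y k)) := by
      intro e1 e2
      have e3 : g.toFun (Y k) = Y (k+1) := by rw [e1, e2, σs]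
      have := hYle (k+1) (by omega)
      rw [e3, sub_self, abs_zero]
      exact ⟨this.1, this.2, mul_nonneg hδ.le (le_min (by linarith) (by linarith))⟩
    have hmoved : L (k+1) = g.toFun (L k) → U (k+1) = g.toFun (U k) →
        L (k+1) ≤ g.toFun (Y k) ∧ g.toFun (Y k) ≤ U (k+1) := by
      intro e1 e2
      have := hYle k hk.le
      rw [e1, e2]
      exact ⟨g.smono.monotone this.1, g.smono.monotone this.2⟩
    rcases lt_or_ge k m with i | i
    · have eL : L (k+1) = g.toFun (L k) := by
        simp only [hL, if_pos i.le, if_pos (show k + 1 ≤ m from i)]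
        rw [gsub, ← σs]; congr 2; ring
      have eU : U (k+1) = g.toFun (U k) := by
        simp only [hU, if_pos i.le, if_pos (show k + 1 ≤ m from i)]
        rw [gsub, ← σs]; congr 2; ring
      obtain ⟨z1, z2⟩ := hmoved eL eU
      refine ⟨z1, z2, ?_⟩
      have := y1st k i
      simp only [add_sub_cancel_left] at this
      simp only [hL, hY, hU, if_pos i.le, if_pos (show k + 1 ≤ m from i)]
      exact this
    · rcases lt_or_ge (k + m) n with i2 | i2
      · apply easy
        · rcases i.eq_or_lt with j | j
          · rw [← j]; exact Ym
          · exact (hYm k j i2).2.1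
        · rcases (show k + 1 + m ≤ n by omega).eq_or_lt with j | j
          · rw [show k + 1 = n - m by omega]; exact Yn'
          · exact (hYm (k+1) (by omega) j).2.1
      · have j1 : ¬ k ≤ m := by omega
        have j2 : ¬ k + 1 ≤ m := by omega
        have j3 : n ≤ k + 1 + m := by omega
        have eL : L (k+1) = g.toFun (L k) := by
          simp only [hL, if_neg j1, if_neg j2, if_pos i2, if_pos j3]
          rw [gadd, ← σs]; congr 2; omega
        have eU : U (k+1) = g.toFun (U k) := by
          simp only [hU, if_neg j1, if_neg j2, if_pos i2, if_pos j3]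
          rw [gadd, ← σs]; congr 2; omega
        obtain ⟨z1, z2⟩ := hmoved eL eU
        refine ⟨z1, z2, ?_⟩
        have := y2st (k + m - n) (by omega)
        simp only [add_sub_cancel_left] at this
        simp only [hL, hY, hU, if_neg j1, if_neg j2, if_pos i2, if_pos j3]
        rwa [show n - m - u + (k + m - n + 1) = k + 1 - u by omega,
          show n - m - v + (k + m - n + 1) = k + 1 - v by omega,
          show k + m - n + 1 = k + 1 + m - n by omega] at this
  have hsep : ∀ k ≤ n, ∀ l ≤ n, k ≠ l → ∀ M : ℤ, U k + M ≤ L l ∨ U l ≤ L k + M := by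
    intro k hk l hl hkl M
    rcases sa k l hkl hk hl M with h1 | h1
    · exact Or.inl (UL k l M h1)
    · right
      have := UL l k (-M) (by push_cast; linarith)
      push_cast at this; linarith
  obtain ⟨gi, gi1, gi2, gi3⟩ := g.assemble L U Y n hδ h10 hLU hsep (fun k hk => (step k hk).1)
    (fun k hk => (step k hk).2.1) (fun k hk => (step k hk).2.2)
  rw [Y0] at gi3
  refine ⟨gi, gi1, gi2, ?_, ?_, ?_⟩
  · intro k hk l hl M hM
    simp only
    rw [gi3 k hk, gi3 l hl]
    rcases eq_or_ne k l with e | e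
    · subst e; linarith
    · rcases sa k l e hk hl M with h1 | h1
      · have hle := UL k l M h1
        have a1 := hYle k hk
        have a2 := hYle l hl
        by_cases c1 : k ≤ m ∨ n ≤ k + m
        · have := hYs k hk c1
          linarith
        · by_cases c2 : l ≤ m ∨ n ≤ l + m
          · have := hYs l hl c2
            linarith
          · push Not at c1 c2
            rw [(hYm k c1.1 c1.2).2.1, (hYm l c2.1 c2.2).2.1]
            have := σo k l M 0 (by push_cast; linarith)
            push_cast at this; linarith
      · have := am0 k
        have := ap0 l
        linarith
  · rw [gi3 v (by omega), gi3 u (by omega), (hYm v (by omega) (by omega)).2.1,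
      (hYm u (by omega) (by omega)).2.1]
    exact t3
  · rw [gi3 n le_rfl, gi3 (n - u) (by omega), gi3 (n - v) (by omega),
      (hYm (n - u) (by omega) (by omega)).2.1, (hYm (n - v) (by omega) (by omega)).2.1, Yn]
    exact q3

end CircleDiffeo

lemma exists_times {α : ℝ} (hα : Irrational α) : ∃ k : ℕ → ℕ, StrictMono k ∧ ∀ i : ℕ,
    ∃ (u v : ℕ) (p p' : ℤ) (m : ℕ), Farey α u v p p' ∧ (Farey.G1 α u v p p' ∨ Farey.G2 α u v p p') ∧
      2 ≤ u ∧ u + 2 * m < k i ∧ v + 2 * m < k i ∧ k i + 1 < u + v ∧ min u v ≤ 40 * m ∧ i ≤ m := by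
  apply Filter.extraction_forall_of_frequently (P := fun i n =>
    ∃ (u v : ℕ) (p p' : ℤ) (m : ℕ), Farey α u v p p' ∧ (Farey.G1 α u v p p' ∨ Farey.G2 α u v p p') ∧
      2 ≤ u ∧ u + 2 * m < n ∧ v + 2 * m < n ∧ n + 1 < u + v ∧ min u v ≤ 40 * m ∧ i ≤ m)
  intro i
  rw [Filter.frequently_atTop]
  intro N
  obtain ⟨u, v, p, p', F, hu, hv, G⟩ := Farey.good hα (100 + 16 * i + N)
  refine ⟨max u v + min u v / 2, by omega, u, v, p, p', min u v / 16, F, G, ?_⟩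
  refine ⟨by omega, by omega, by omega, by omega, by omega, by omega⟩

lemma distC1_le (gi g : CircleDiffeo) {δ D : ℝ} (h1 : ∀ z, |gi.toFun z - g.toFun z| ≤ δ)
    (hD : ∀ z, deriv g.toFun z ≤ D) (hδ : 0 < δ)
    (h2 : ∀ z, |deriv gi.toFun z - deriv g.toFun z| ≤ 10 * δ * deriv g.toFun z) :
    distC1 gi.toFun g.toFun ≤ δ + 10 * δ * D := by
  unfold distC1
  haveI : Nonempty (Icc (0:ℝ) 1) := ⟨⟨0, by simp⟩⟩
  apply add_le_add
  · exact ciSup_le (fun z => h1 z)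
  · apply ciSup_le
    intro z
    refine (h2 z).trans ?_
    have := hD z
    gcongr

/-- **Theorem (characteristic times).** For any irrational `α` there is a strictly
increasing sequence `(kᵢ)` of natural numbers such that, for any `C¹`-diffeomorphisms
`f`, `g` with rotation number `α`, any points `x`, `y` and any `ε > 0` :
(i) all orbit segments of length `kᵢ` are adapted; (ii) for all large `i` some
`gᵢ` `ε`-`C¹`-close to `g` has `{y,…,gᵢ^{kᵢ}(y)}` adapted, ordered as
`{x,…,f^{kᵢ}(x)}` and as `{y,…,g^{kᵢ}(y)}`, with the same initial and final ratios
as `f` on `{x,…,f^{kᵢ}(x)}`. -/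
theorem characteristic_times (α : ℝ) (hα : Irrational α) :
    ∃ k : ℕ → ℕ, StrictMono k ∧
      ∀ (f g : CircleDiffeo), hasRotationNumber f α → hasRotationNumber g α →
      ∀ (x y : ℝ) (ε : ℝ), 0 < ε →
        (∀ i : ℕ, (∃ I J : ℕ, IsAdaptedSeg f.toFun x (k i) I J) ∧
          (∃ I J : ℕ, IsAdaptedSeg g.toFun y (k i) I J)) ∧
        (∃ i₀ : ℕ, ∀ i : ℕ, i₀ ≤ i → ∃ gi : CircleDiffeo,
          distC1 gi.toFun g.toFun < ε ∧
          SimilarlyOrdered (fun m => f.toFun^[m] x) (fun m => gi.toFun^[m] y) (k i) ∧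
          SimilarlyOrdered (fun m => g.toFun^[m] y) (fun m => gi.toFun^[m] y) (k i) ∧
          ∃ I J : ℕ, IsAdaptedSeg f.toFun x (k i) I J ∧
            IsAdaptedSeg gi.toFun y (k i) I J ∧
            initialRatio gi.toFun y (k i) I J = initialRatio f.toFun x (k i) I J ∧
            finalRatio gi.toFun y (k i) I J = finalRatio f.toFun x (k i) I J) := by
  obtain ⟨k, hk, hdata⟩ := exists_times hα
  refine ⟨k, hk, ?_⟩
  intro f g hf hg x y ε hε
  refine ⟨?_, ?_⟩
  · intro i
    obtain ⟨u, v, p, p', m, F, -, hu2, hu, hv, hn, -, -⟩ := hdata i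
    exact ⟨⟨_, _, adapt hα F hu2 (by omega) (by omega) hn (f.hOP hf x (k i))⟩,
      ⟨_, _, adapt hα F hu2 (by omega) (by omega) hn (g.hOP hg y (k i))⟩⟩
  obtain ⟨B, hB0, hB⟩ := g.phi_bdd
  set D := Real.exp B with hDdef
  have hD : ∀ z, deriv g.toFun z ≤ D := by
    intro z
    rw [← Real.log_le_iff_le_exp (g.deriv_pos z)]
    exact (le_abs_self _).trans (hB z)
  have hD0 : 0 < D := Real.exp_pos B
  set δ := min (1 / 20) (ε / (2 * (1 + 10 * D))) with hδdef
  have hδ : 0 < δ := lt_min (by norm_num) (by positivity)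
  have hδ1 : δ ≤ 1 / 20 := min_le_left _ _
  have hδ2 : δ + 10 * δ * D < ε := by
    have h1 : δ ≤ ε / (2 * (1 + 10 * D)) := min_le_right _ _
    rw [le_div_iff₀ (by positivity)] at h1
    nlinarith
  set lam := Real.log (1 + δ) with hlam
  have hlam0 : 0 < lam := Real.log_pos (by linarith)
  obtain ⟨C, hC0, hC⟩ := g.modulus (lam / 5) (by positivity)
  obtain ⟨Cf, hCf0, hCf⟩ := f.ratio_bound hα hf (lam / 400) (by positivity)
  obtain ⟨Cg, hCg0, hCg⟩ := g.ratio_bound hα hg (lam / 400) (by positivity)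
  obtain ⟨i₀, hi₀⟩ := exists_nat_ge ((Cf + Cg + 2 * C) / (3 / 5 * lam))
  rw [div_le_iff₀ (by positivity)] at hi₀
  refine ⟨i₀, ?_⟩
  intro i hi
  obtain ⟨u, v, p, p', m, F, G, hu2, hu, hv, hn, hmin, him⟩ := hdata i
  set n := k i with hndef
  have hfo := f.hOP hf x n
  have hgo := g.hOP hg y n
  obtain ⟨e1, e2, p1, p2, p3, p4⟩ := ratios F hu2 (show u < n by omega) (show v < n by omega) hfo
  obtain ⟨bf1, bf2⟩ := hCf u v p p' F G
  obtain ⟨bg1, bg2⟩ := hCg u v p p' F G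
  have hmm : (i₀ : ℝ) ≤ m := by exact_mod_cast hi.trans him
  have hmin' : ((min u v : ℕ) : ℝ) ≤ 40 * m := by exact_mod_cast hmin
  have hfin : 2 * (lam / 400 * (min u v : ℕ)) + Cf + Cg + m * (lam / 5) + 2 * C ≤ m * lam := by
    have h1 : lam / 400 * (min u v : ℕ) ≤ lam / 400 * (40 * m) := by gcongr
    have h2 : (i₀ : ℝ) * (3 / 5 * lam) ≤ m * (3 / 5 * lam) := by gcongr
    nlinarith
  have hRb : |Real.log (initialRatio f.toFun x n (n - u) (n - v))| ≤ lam / 400 * (min u v : ℕ) + Cf := by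
    rw [e1]; exact bf1 x
  have hQb : |Real.log (finalRatio f.toFun x n (n - u) (n - v))| ≤ lam / 400 * (min u v : ℕ) + Cf := by
    rw [e2]
    apply bf2
    · rw [← Function.iterate_add_apply]; congr 2; omega
    · rw [← Function.iterate_add_apply]; congr 2; omega
  obtain ⟨gi, g1, g2, g3, g4, g5⟩ := g.construct hα hg F (n := n) (m := m) hu2 hu hv hn y
    (R := initialRatio f.toFun x n (n - u) (n - v)) (Q := finalRatio f.toFun x n (n - u) (n - v))
    (by rw [e1]; exact div_pos p1 p2) (by rw [e2]; exact div_pos p3 p4) hC0 hC hδ (by linarith)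
    (by intro w; have := bg1 w; linarith)
    (by intro c d1 d2 h1 h2; have := bg2 c d1 d2 h1 h2; linarith)
  obtain ⟨e3, e4, -⟩ := ratios F hu2 (show u < n by omega) (show v < n by omega) g3
  refine ⟨gi, lt_of_le_of_lt (distC1_le gi g g1 hD hδ g2) hδ2, hfo.similar hα g3,
    hgo.similar hα g3, n - u, n - v, adapt hα F hu2 (by omega) (by omega) hn hfo,
    adapt hα F hu2 (by omega) (by omega) hn g3, ?_, ?_⟩
  · rw [e3, g4]
  · rw [e4, g5]
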